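/- arXiv:1008.3514 — 3 statements merged into one kernel-verified Lean document; each statement's English description precedes it below -/
import Mathlib

section
/- (Drift condition for patched MALA over unit physical time.) Let U satisfy Assumption 1. Then there exist θ ∈ (0, β−c) and positive constants γ̄, K, E_⋆ and h_c such that for every stepsize h < h_c and every x ∈ R_h, the ⌊1/h⌋-step patched MALA kernel satisfies (P̄_h^{⌊1/h⌋} Φ_θ)(x) ≤ e^{−γ̄}·Φ_θ(x) + K. -/
open MeasureTheory Real Filter
open scoped ENNReal

noncomputable section

abbrev Euc (n : ℕ) := EuclideanSpace ℝ (Fin n)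

/-- Second derivative of `U` at `x` as a bilinear form. -/
def D2 {n : ℕ} (U : Euc n → ℝ) (x v w : Euc n) : ℝ :=
  iteratedFDeriv ℝ 2 U x ![v, w]

/-- Laplacian of `U` at `x`. -/
def lapl {n : ℕ} (U : Euc n → ℝ) (x : Euc n) : ℝ :=
  ∑ i, D2 U x (EuclideanSpace.single i 1) (EuclideanSpace.single i 1)

/-- Assumption 1 on the potential `U`. -/
structure Assumption1 (n : ℕ) (β : ℝ) (U : Euc n → ℝ) where
  smooth : ContDiff ℝ 4 U
  c : ℝ
  d : ℝ
  EB : ℝ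
  c_pos : 0 < c
  c_lt : c < β
  d_pos : 0 < d
  one_le : ∀ x, 1 ≤ U x
  quad_growth : ∀ C > (0:ℝ), ∃ E > (0:ℝ), ∀ x, U x > E → C * (1 + ‖x‖ ^ 2) ≤ U x
  driftB : ∀ x, U x > EB → lapl U x ≤ c * ‖gradient U x‖ ^ 2 - d * U x
  hess_lb : ∃ C : ℝ, 0 ≤ C ∧ ∀ x η : Euc n, -C * ‖η‖ ^ 2 ≤ D2 U x η η
  deriv_bound : ∃ C > (0:ℝ), ∀ x,
    ‖iteratedFDeriv ℝ 4 U x‖ ⊔ ‖iteratedFDeriv ℝ 3 U x‖ ⊔ ‖iteratedFDeriv ℝ 2 U x‖ ⊔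
      ‖gradient U x‖ ≤ C * U x

/-- The Gibbs measure with density `Z⁻¹ exp(-β U x)`. -/
def gibbs (n : ℕ) (β : ℝ) (U : Euc n → ℝ) : Measure (Euc n) :=
  volume.withDensity fun x => ENNReal.ofReal (exp (-β * U x) / ∫ y, exp (-β * U y))

/-- Total variation distance, `‖μ - ν‖_TV = 2 sup_A |μ(A) - ν(A)|`. -/
def tvDist {α : Type*} [MeasurableSpace α] (μ ν : Measure α) : ℝ :=
  2 * ⨆ A : {A : Set α // MeasurableSet A}, |(μ A.1).toReal - (ν A.1).toReal|

/-- Forward Euler transition density `q_h(x,y)`. -/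
def eulerDensity (n : ℕ) (β h : ℝ) (U : Euc n → ℝ) (x y : Euc n) : ℝ :=
  (4 * π * β⁻¹ * h) ^ (-(n : ℝ) / 2) *
    exp (-‖y - x + h • gradient U x‖ ^ 2 / (4 * β⁻¹ * h))

/-- MALA acceptance probability `α_h(x,y)`. -/
def accept (n : ℕ) (β h : ℝ) (U : Euc n → ℝ) (x y : Euc n) : ℝ :=
  min 1 ((eulerDensity n β h U y x * exp (-β * U y)) /
         (eulerDensity n β h U x y * exp (-β * U x)))

/-- One-step MALA transition kernel. -/
def malaKernel (n : ℕ) (β h : ℝ) (U : Euc n → ℝ) (x : Euc n) : Measure (Euc n) :=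
  volume.withDensity (fun y => ENNReal.ofReal (accept n β h U x y * eulerDensity n β h U x y))
  + (1 - ∫⁻ y, ENNReal.ofReal (accept n β h U x y * eulerDensity n β h U x y)) • Measure.dirac x

/-- `k`-step iterate of a transition kernel. -/
def iterKernel {α : Type*} [MeasurableSpace α] (κ : α → Measure α) : ℕ → α → Measure α
  | 0, x => Measure.dirac x
  | k + 1, x => (iterKernel κ k x).bind κ

/-- The level set `R_h = {x : U(x) < E_⋆ h^{-1/4}}`. -/
def Rset (n : ℕ) (h Estar : ℝ) (U : Euc n → ℝ) : Set (Euc n) :=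
  {x | U x < Estar * h ^ (-(1:ℝ) / 4)}

open scoped Classical in
/-- Patched MALA acceptance probability. -/
def acceptBar (n : ℕ) (β h Estar : ℝ) (U : Euc n → ℝ) (x y : Euc n) : ℝ :=
  if x ∈ Rset n h Estar U ∧ y ∈ Rset n h Estar U then accept n β h U x y else 0

/-- One-step patched MALA transition kernel. -/
def patchedKernel (n : ℕ) (β h Estar : ℝ) (U : Euc n → ℝ) (x : Euc n) : Measure (Euc n) :=
  volume.withDensity
    (fun y => ENNReal.ofReal (acceptBar n β h Estar U x y * eulerDensity n β h U x y))
  + (1 - ∫⁻ y, ENNReal.ofReal (acceptBar n β h Estar U x y * eulerDensity n β h U x y)) •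
      Measure.dirac x

/-- Standard Gaussian measure `N(0, I)` on `ℝ^n`. -/
def stdGaussian (n : ℕ) : Measure (Euc n) :=
  volume.withDensity fun ξ => ENNReal.ofReal ((2 * π) ^ (-(n : ℝ) / 2) * exp (-‖ξ‖ ^ 2 / 2))

/-- Forward Euler transition kernel. -/
def eulerKernel (n : ℕ) (β h : ℝ) (U : Euc n → ℝ) (x : Euc n) : Measure (Euc n) :=
  volume.withDensity fun y => ENNReal.ofReal (eulerDensity n β h U x y)


theorem pm_gauss_integrable {n : ℕ} {b : ℝ} (hb : 0 < b) :
    Integrable (fun z : Euc n => exp (-b * ‖z‖ ^ 2)) := by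
  apply MeasureTheory.Integrable.of_integral_ne_zero
  rw [GaussianFourier.integral_rexp_neg_mul_sq_norm hb]
  positivity

theorem pm_gauss_dom {n : ℕ} {b : ℝ} (hb : 0 < b) (f : Euc n → ℝ) (hf : Continuous f) (M : ℝ)
    (hM : ∀ z, |f z| ≤ M * exp (b / 2 * ‖z‖ ^ 2)) :
    Integrable (fun z : Euc n => exp (-b * ‖z‖ ^ 2) * f z) := by
  refine Integrable.mono' ((pm_gauss_integrable (n := n) (half_pos hb)).const_mul M) ?_ ?_
  · exact (by fun_prop : Continuous fun z : Euc n => exp (-b * ‖z‖ ^ 2) * f z).aestronglyMeasurable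
  · refine Eventually.of_forall fun z => ?_
    rw [norm_mul, norm_eq_abs, norm_eq_abs, abs_of_pos (exp_pos _)]
    calc _ ≤ exp (-b * ‖z‖ ^ 2) * (M * exp (b / 2 * ‖z‖ ^ 2)) := by gcongr; exact hM z
      _ = M * (exp (-b * ‖z‖ ^ 2) * exp (b / 2 * ‖z‖ ^ 2)) := by ring
      _ = _ := by rw [← exp_add]; ring_nf

theorem pm_sq_le {b : ℝ} (hb : 0 < b) (r : ℝ) : r ^ 2 ≤ 2 / b * exp (b / 2 * r ^ 2) := by
  have h := add_one_le_exp (b / 2 * r ^ 2)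
  calc r ^ 2 = 2 / b * (b / 2 * r ^ 2) := by field_simp
    _ ≤ _ := by gcongr; linarith

theorem pm_gauss_sq1 {b : ℝ} (hb : 0 < b) :
    ∫ t : ℝ, t * t * exp (-b * t ^ 2) = 1 / (2 * b) * √(π / b) := by
  have i0 : Integrable (fun t : ℝ => exp (-b * t ^ 2)) := integrable_exp_neg_mul_sq hb
  have i1 : Integrable (fun t : ℝ => t * exp (-b * t ^ 2)) := integrable_mul_exp_neg_mul_sq hb
  have i2 : Integrable (fun t : ℝ => t * t * exp (-b * t ^ 2)) := by
    have := integrable_rpow_mul_exp_neg_mul_sq hb (s := 2) (by norm_num)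
    refine this.congr (Eventually.of_forall fun t => ?_)
    simp only [rpow_ofNat]; ring
  have i3 : Integrable (fun t : ℝ => exp (-b * t ^ 2) - 2 * b * (t * t * exp (-b * t ^ 2))) :=
    i0.sub (i2.const_mul _)
  have key := integral_eq_zero_of_hasDerivAt_of_integrable
    (f := fun t : ℝ => t * exp (-b * t ^ 2))
    (f' := fun t : ℝ => exp (-b * t ^ 2) - 2 * b * (t * t * exp (-b * t ^ 2)))
    (fun t => by
      have h1 : HasDerivAt (fun t : ℝ => -b * t ^ 2) (-b * (2 * t)) t := by
        simpa using (hasDerivAt_pow 2 t).const_mul (-b)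
      refine ((hasDerivAt_id t).mul h1.exp).congr_deriv ?_
      simp only [id]; ring) i3 i1
  rw [integral_sub i0 (i2.const_mul _), integral_const_mul, integral_gaussian] at key
  have hs : √(π / b) = 2 * b * ∫ t : ℝ, t * t * exp (-b * t ^ 2) := by linarith
  rw [hs, ← mul_assoc]
  have hb2 : 1 / (2 * b) * (2 * b) = 1 := by field_simp
  rw [hb2, one_mul]

theorem pm_gauss_odd1 {b : ℝ} : ∫ t : ℝ, t * exp (-b * t ^ 2) = 0 := by
  have := integral_neg_eq_self (fun t : ℝ => t * exp (-b * t ^ 2)) volume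
  simp only [neg_mul, even_two, Even.neg_pow, integral_neg] at this ⊢
  linarith

theorem pm_gauss_sq {n : ℕ} {b : ℝ} (hb : 0 < b) (i j : Fin n) :
    ∫ z : Euc n, exp (-b * ‖z‖ ^ 2) * (z i * z j)
      = if i = j then 1 / (2 * b) * (π / b) ^ ((n : ℝ) / 2) else 0 := by
  let f : Fin n → ℝ → ℝ := fun k t =>
    (if k = i then t else 1) * (if k = j then t else 1) * exp (-b * t ^ 2)
  have e1 : ∫ z : Euc n, exp (-b * ‖z‖ ^ 2) * (z i * z j) = ∏ k, ∫ t, f k t := by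
    rw [← integral_fintype_prod_volume_eq_prod f]
    rw [← (PiLp.volume_preserving_ofLp (Fin n)).integral_comp
      (MeasurableEquiv.toLp 2 (Fin n → ℝ)).symm.measurableEmbedding]
    congr 1
    ext z
    simp only [f, Finset.prod_mul_distrib, Finset.prod_ite_eq', Finset.mem_univ, if_true,
      ← exp_sum, ← Finset.mul_sum]
    rw [EuclideanSpace.real_norm_sq_eq]
    ring
  rw [e1]
  split_ifs with hij
  · subst hij
    rw [← Finset.mul_prod_erase _ _ (Finset.mem_univ i)]
    have h1 : ∫ t, f i t = 1 / (2 * b) * √(π / b) := by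
      rw [← pm_gauss_sq1 hb]; simp [f]
    have h2 : ∏ k ∈ Finset.univ.erase i, ∫ t, f k t = ∏ k ∈ Finset.univ.erase i, √(π / b) := by
      refine Finset.prod_congr rfl fun k hk => ?_
      have := Finset.ne_of_mem_erase hk
      simp only [f, this, if_false, one_mul]
      exact integral_gaussian b
    rw [h1, h2, mul_assoc, Finset.mul_prod_erase _ (fun _ => √(π / b)) (Finset.mem_univ i)]
    simp only [Finset.prod_const, Finset.card_univ, Fintype.card_fin]
    rw [sqrt_eq_rpow, ← rpow_natCast, ← rpow_mul (by positivity)]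
    ring_nf
  · apply Finset.prod_eq_zero (Finset.mem_univ i)
    simp only [f, if_true, hij, if_false, mul_one]
    exact pm_gauss_odd1

theorem pm_gauss_lin {n : ℕ} {b : ℝ} (l : Euc n →L[ℝ] ℝ) :
    ∫ z : Euc n, exp (-b * ‖z‖ ^ 2) * l z = 0 := by
  have := integral_neg_eq_self (fun z : Euc n => exp (-b * ‖z‖ ^ 2) * l z) volume
  simp only [norm_neg, map_neg, mul_neg, integral_neg] at this
  linarith

theorem pm_quad_expand {n : ℕ} (A : Euc n →L[ℝ] Euc n →L[ℝ] ℝ) (z : Euc n) :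
    A z z = ∑ i, ∑ j, A (EuclideanSpace.single i 1) (EuclideanSpace.single j 1) * (z i * z j) := by
  have hz : z = ∑ i, z i • EuclideanSpace.single i (1:ℝ) := by
    ext k; simp [Finset.sum_apply, Pi.single_apply]
  conv_lhs => rw [hz]
  simp only [map_sum, map_smul, _root_.sum_apply, _root_.smul_apply,
    smul_eq_mul]
  rw [Finset.sum_comm]
  refine Finset.sum_congr rfl fun i _ => ?_
  rw [Finset.mul_sum]
  refine Finset.sum_congr rfl fun j _ => by ring

theorem pm_gauss_sq_int {n : ℕ} {b : ℝ} (hb : 0 < b) (i j : Fin n) :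
    Integrable (fun z : Euc n => exp (-b * ‖z‖ ^ 2) * (z i * z j)) := by
  refine pm_gauss_dom hb _ (by fun_prop) (2 / b) fun z => ?_
  refine le_trans ?_ (pm_sq_le hb _)
  rw [abs_mul, sq]
  gcongr
  · exact PiLp.norm_apply_le z i
  · exact PiLp.norm_apply_le z j

theorem pm_gauss_quad_int {n : ℕ} {b : ℝ} (hb : 0 < b) (A : Euc n →L[ℝ] Euc n →L[ℝ] ℝ) :
    Integrable (fun z : Euc n => exp (-b * ‖z‖ ^ 2) * A z z) := by
  simp only [pm_quad_expand A, Finset.mul_sum]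
  refine integrable_finsetSum _ fun i _ => integrable_finsetSum _ fun j _ => ?_
  refine ((pm_gauss_sq_int hb i j).const_mul
    (A (EuclideanSpace.single i 1) (EuclideanSpace.single j 1))).congr
    (Eventually.of_forall fun z => ?_)
  simp only; ring

theorem pm_gauss_quad {n : ℕ} {b : ℝ} (hb : 0 < b) (A : Euc n →L[ℝ] Euc n →L[ℝ] ℝ) :
    ∫ z : Euc n, exp (-b * ‖z‖ ^ 2) * A z z
      = (π / b) ^ ((n : ℝ) / 2) * (1 / (2 * b) *
        ∑ i, A (EuclideanSpace.single i 1) (EuclideanSpace.single i 1)) := by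
  have e : ∀ z : Euc n, exp (-b * ‖z‖ ^ 2) * A z z = ∑ i, ∑ j,
      A (EuclideanSpace.single i 1) (EuclideanSpace.single j 1) *
        (exp (-b * ‖z‖ ^ 2) * (z i * z j)) := by
    intro z
    rw [pm_quad_expand A, Finset.mul_sum]
    refine Finset.sum_congr rfl fun i _ => ?_
    rw [Finset.mul_sum]
    refine Finset.sum_congr rfl fun j _ => by ring
  simp only [e]
  rw [integral_finsetSum _ fun i _ => integrable_finsetSum _ fun j _ =>
    (pm_gauss_sq_int hb i j).const_mul _]
  rw [Finset.mul_sum, Finset.mul_sum]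
  refine Finset.sum_congr rfl fun i _ => ?_
  rw [integral_finsetSum _ fun j _ => (pm_gauss_sq_int hb i j).const_mul _]
  simp only [integral_const_mul, pm_gauss_sq hb]
  simp only [mul_ite, mul_zero, Finset.sum_ite_eq, Finset.mem_univ, if_true]
  ring

theorem pm_gauss_norm_sq_int {n : ℕ} {b : ℝ} (hb : 0 < b) :
    Integrable (fun z : Euc n => exp (-b * ‖z‖ ^ 2) * ‖z‖ ^ 2) := by
  refine pm_gauss_dom hb _ (by fun_prop) (2 / b) fun z => ?_
  rw [abs_of_nonneg (by positivity)]
  exact pm_sq_le hb _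

theorem pm_gauss_norm_sq {n : ℕ} {b : ℝ} (hb : 0 < b) :
    ∫ z : Euc n, exp (-b * ‖z‖ ^ 2) * ‖z‖ ^ 2
      = (π / b) ^ ((n : ℝ) / 2) * (1 / (2 * b) * n) := by
  have e : ∀ z : Euc n, exp (-b * ‖z‖ ^ 2) * ‖z‖ ^ 2 = exp (-b * ‖z‖ ^ 2) * innerSL ℝ z z := by
    intro z
    simp
  simp only [e]
  rw [pm_gauss_quad hb]
  have h : ∀ i : Fin n, innerSL ℝ (EuclideanSpace.single i (1:ℝ)) (EuclideanSpace.single i (1:ℝ))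
      = 1 := by
    intro i
    rw [innerSL_apply_apply, real_inner_self_eq_norm_sq]
    simp
  simp only [h]
  simp

theorem pm_gauss_lin_int {n : ℕ} {b : ℝ} (hb : 0 < b) (l : Euc n →L[ℝ] ℝ) :
    Integrable (fun z : Euc n => exp (-b * ‖z‖ ^ 2) * l z) := by
  refine pm_gauss_dom hb _ (by fun_prop) (‖l‖ * (1 + 2 / b)) fun z => ?_
  have h1 := l.le_opNorm z
  have h2 : ‖z‖ ≤ 1 + ‖z‖ ^ 2 := by nlinarith [sq_nonneg (‖z‖ - 1), norm_nonneg z]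
  have h3 := pm_sq_le hb ‖z‖
  have h4 : 1 ≤ exp (b / 2 * ‖z‖ ^ 2) := one_le_exp (by positivity)
  calc |l z| ≤ ‖l‖ * ‖z‖ := h1
    _ ≤ ‖l‖ * ((1 + 2 / b) * exp (b / 2 * ‖z‖ ^ 2)) := by
      gcongr
      linarith
    _ = _ := by ring

section PatchedMala

set_option synthInstance.maxHeartbeats 400000
set_option synthInstance.maxSize 4000
set_option maxSynthPendingDepth 6

theorem pm_deriv_facts {n : ℕ} {β : ℝ} {U : Euc n → ℝ} (hU : Assumption1 n β U) :
    ∃ C > (0:ℝ), ∀ w, ‖fderiv ℝ U w‖ ≤ C * U w ∧ ‖fderiv ℝ (fderiv ℝ U) w‖ ≤ C * U w ∧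
      ‖fderiv ℝ (fderiv ℝ (fderiv ℝ U)) w‖ ≤ C * U w := by
  obtain ⟨C, hC, h⟩ := hU.deriv_bound
  refine ⟨C, hC, fun w => ?_⟩
  have hw := h w
  simp only [sup_le_iff] at hw
  obtain ⟨⟨⟨-, h3⟩, h2⟩, h1⟩ := hw
  refine ⟨?_, ?_, ?_⟩
  · simpa [gradient] using h1
  · rwa [← norm_iteratedFDeriv_fderiv, norm_iteratedFDeriv_one] at h2
  · rwa [← norm_iteratedFDeriv_fderiv, ← norm_iteratedFDeriv_fderiv, norm_iteratedFDeriv_one] at h3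

theorem pm_grad_norm {n : ℕ} (U : Euc n → ℝ) (x : Euc n) : ‖gradient U x‖ = ‖fderiv ℝ U x‖ := by
  simp [gradient]

theorem pm_grad_inner {n : ℕ} (U : Euc n → ℝ) (x v : Euc n) :
    inner ℝ (gradient U x) v = fderiv ℝ U x v := by
  simp [gradient]

theorem pm_D2_eq {n : ℕ} (U : Euc n → ℝ) (x v w : Euc n) :
    D2 U x v w = fderiv ℝ (fderiv ℝ U) x v w := by
  simp [D2, iteratedFDeriv_two_apply]

theorem pm_U_growth {n : ℕ} {U : Euc n → ℝ} (hd : Differentiable ℝ U) (h1 : ∀ x, 1 ≤ U x) {C : ℝ}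
    (hC : ∀ w, ‖fderiv ℝ U w‖ ≤ C * U w) (x y : Euc n) : U y ≤ U x * exp (C * ‖y - x‖) := by
  have hpos : ∀ x, 0 < U x := fun x => lt_of_lt_of_le one_pos (h1 x)
  have key := convex_univ.norm_image_sub_le_of_norm_hasFDerivWithin_le (𝕜 := ℝ)
    (f := fun w => log (U w)) (f' := fun w => (U w)⁻¹ • fderiv ℝ U w) (C := C)
    (fun w _ => ((hd w).hasFDerivAt.log (hpos w).ne').hasFDerivWithinAt)
    (fun w _ => by
      rw [norm_smul, norm_inv, norm_eq_abs, abs_of_pos (hpos w), inv_mul_le_iff₀ (hpos w)]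
      linarith [hC w]) (Set.mem_univ x) (Set.mem_univ y)
  have h2 : log (U y) ≤ log (U x) + C * ‖y - x‖ := by
    have := (le_abs_self _).trans key
    linarith
  calc U y = exp (log (U y)) := (exp_log (hpos y)).symm
    _ ≤ exp (log (U x) + C * ‖y - x‖) := exp_le_exp.mpr h2
    _ = _ := by rw [exp_add, exp_log (hpos x)]

theorem pm_taylor {n : ℕ} {U : Euc n → ℝ} (hs : ContDiff ℝ 4 U) (x y : Euc n) {M : ℝ}
    (hM : ∀ w, ‖w - x‖ ≤ ‖y - x‖ → ‖fderiv ℝ U w‖ ≤ M ∧ ‖fderiv ℝ (fderiv ℝ U) w‖ ≤ M ∧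
      ‖fderiv ℝ (fderiv ℝ (fderiv ℝ U)) w‖ ≤ M) :
    |U y - U x| ≤ M * ‖y - x‖ ∧ ‖fderiv ℝ U y - fderiv ℝ U x‖ ≤ M * ‖y - x‖ ∧
    ‖fderiv ℝ U y - fderiv ℝ U x - fderiv ℝ (fderiv ℝ U) x (y - x)‖ ≤ M * ‖y - x‖ ^ 2 ∧
    |U y - U x - fderiv ℝ U x (y - x) - 1 / 2 * fderiv ℝ (fderiv ℝ U) x (y - x) (y - x)|
      ≤ M * ‖y - x‖ ^ 3 := by
  have c1 : ContDiff ℝ 3 (fderiv ℝ U) := hs.fderiv_right (by norm_num)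
  have c2 : ContDiff ℝ 2 (fderiv ℝ (fderiv ℝ U)) := c1.fderiv_right (by norm_num)
  have d0 : Differentiable ℝ U := hs.differentiable (by norm_num)
  have d1 : Differentiable ℝ (fderiv ℝ U) := c1.differentiable (by norm_num)
  have d2 : Differentiable ℝ (fderiv ℝ (fderiv ℝ U)) := c2.differentiable (by norm_num)
  have hM0 : 0 ≤ M := (norm_nonneg _).trans (hM x (by simp)).1
  set r := ‖y - x‖ with hr
  have mem : ∀ w, w ∈ Metric.closedBall x r ↔ ‖w - x‖ ≤ r := fun w => mem_closedBall_iff_norm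
  have cv : Convex ℝ (Metric.closedBall x r) := convex_closedBall x r
  have hx : x ∈ Metric.closedBall x r := by rw [mem]; simp [r]
  have hy : y ∈ Metric.closedBall x r := by rw [mem]
  have s2 : ∀ w ∈ Metric.closedBall x r,
      ‖fderiv ℝ (fderiv ℝ U) w - fderiv ℝ (fderiv ℝ U) x‖ ≤ M * r := fun w hw =>
    (cv.norm_image_sub_le_of_norm_fderiv_le (𝕜 := ℝ) (fun z _ => d2 z)
      (fun z hz => (hM z ((mem z).1 hz)).2.2) hx hw).trans
      (mul_le_mul_of_nonneg_left ((mem w).1 hw) hM0)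
  have s1 : ∀ w ∈ Metric.closedBall x r,
      ‖fderiv ℝ U w - fderiv ℝ U x - fderiv ℝ (fderiv ℝ U) x (w - x)‖ ≤ M * r ^ 2 := fun w hw => by
    refine (cv.norm_image_sub_le_of_norm_fderiv_le' (𝕜 := ℝ) (fun z _ => d1 z) s2 hx hw).trans ?_
    calc M * r * ‖w - x‖ ≤ M * r * r := by
          gcongr
          exact (mem w).1 hw
      _ = _ := by ring
  refine ⟨?_, ?_, s1 y hy, ?_⟩
  · exact cv.norm_image_sub_le_of_norm_fderiv_le (𝕜 := ℝ) (fun z _ => d0 z)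
      (fun z hz => (hM z ((mem z).1 hz)).1) hx hy
  · exact cv.norm_image_sub_le_of_norm_fderiv_le (𝕜 := ℝ) (fun z _ => d1 z)
      (fun z hz => (hM z ((mem z).1 hz)).2.1) hx hy
  · set A := fderiv ℝ (fderiv ℝ U) x with hA
    have symm : ∀ v w, A v w = A w v := by
      have := (hs.contDiffAt (x := x)).isSymmSndFDerivAt (by simp; norm_num)
      intro v w
      exact this v w
    have hder : ∀ w, HasFDerivAt (fun w => U w - fderiv ℝ U x (w - x) - 1 / 2 * A (w - x) (w - x))
        (fderiv ℝ U w - fderiv ℝ U x - A (w - x)) w := by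
      intro w
      have e1 : HasFDerivAt (fun w => w - x) (ContinuousLinearMap.id ℝ (Euc n)) w :=
        (hasFDerivAt_id w).sub_const x
      have e2 : HasFDerivAt (fun w => fderiv ℝ U x (w - x)) (fderiv ℝ U x) w := by
        exact ((fderiv ℝ U x).hasFDerivAt.comp w e1).congr_fderiv (by ext; simp)
      have e3 : HasFDerivAt (fun w => A (w - x)) A w := by
        exact (A.hasFDerivAt.comp w e1).congr_fderiv (by ext; simp)
      have e4 := (e3.clm_apply e1).const_mul (1 / 2)
      refine (((d0 w).hasFDerivAt.sub e2).sub e4).congr_fderiv ?_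
      ext v
      simp [symm v w, symm v x]
      ring
    have := cv.norm_image_sub_le_of_norm_hasFDerivWithin_le (𝕜 := ℝ)
      (fun w _ => (hder w).hasFDerivWithinAt) s1 hx hy
    simp only [sub_self, map_zero, mul_zero, sub_zero] at this
    rw [norm_eq_abs] at this
    calc _ = _ := by congr 1; ring
      _ ≤ _ := this
      _ = _ := by ring

theorem pm_pow_le_exp {ρ : ℝ} (h : 0 ≤ ρ) :
    ρ ^ 2 ≤ 2 * exp ρ ∧ ρ ^ 3 ≤ 6 * exp ρ ∧ ρ ^ 4 ≤ 24 * exp ρ ∧ ρ ^ 5 ≤ 120 * exp ρ := by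
  have h2 := pow_div_factorial_le_exp ρ h 2
  have h3 := pow_div_factorial_le_exp ρ h 3
  have h4 := pow_div_factorial_le_exp ρ h 4
  have h5 := pow_div_factorial_le_exp ρ h 5
  norm_num [Nat.factorial] at h2 h3 h4 h5
  refine ⟨?_, ?_, ?_, ?_⟩ <;> linarith

theorem pm_num_on {s ρ L θ β Δ a b p al : ℝ} (hs : 0 < s) (hs1 : s ≤ 1) (hρ : 0 ≤ ρ) (hL : 0 < L)
    (hθ : 0 < θ) (hβ : 0 < β) (hθL : θ * L ≤ 1 / 2) (hρs : s * ρ ≤ 1)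
    (ha : |a| ≤ p * (s ^ 2 * ρ)) (hb : |b| ≤ L * s ^ 3 * ρ ^ 2)
    (hT : |Δ - a - 1 / 2 * b| ≤ L * s ^ 5 * ρ ^ 3) (hΔ : |Δ| ≤ L * s * ρ)
    (hal : 1 - al ≤ β * (2 * (L * s ^ 5 * ρ ^ 3) + 1 / 2 * L ^ 2 * s ^ 4 * ρ)) :
    exp (θ * Δ) - 1 + (1 - al) * |exp (θ * Δ) - 1| ≤
      θ * (a + 1 / 2 * b) + 2 * θ ^ 2 * p ^ 2 * (s ^ 2 * ρ) ^ 2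
        + (30 + β * (48 * L + L ^ 2)) * s ^ 5 * exp ρ := by
  obtain ⟨e2, e3, e4, e5⟩ := pm_pow_le_exp hρ
  have hu : |θ * Δ| ≤ 1 / 2 * (s * ρ) := by
    rw [abs_mul, abs_of_pos hθ]
    calc θ * |Δ| ≤ θ * (L * s * ρ) := by gcongr
      _ = (θ * L) * (s * ρ) := by ring
      _ ≤ _ := by gcongr
  have hu1 : |θ * Δ| ≤ 1 := by linarith
  have hA1 : exp (θ * Δ) - 1 ≤ θ * Δ + (θ * Δ) ^ 2 := by
    have := (abs_le.1 (abs_exp_sub_one_sub_id_le hu1)).2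
    linarith
  have hA2 : |exp (θ * Δ) - 1| ≤ s * ρ := by
    have := abs_exp_sub_one_le hu1
    linarith
  have s5 : s ^ 6 ≤ s ^ 5 := pow_le_pow_of_le_one hs.le hs1 (by norm_num)
  have hsr : s ^ 2 * ρ ≤ 1 := by nlinarith
  have t1 : θ * Δ ≤ θ * (a + 1 / 2 * b) + 3 * s ^ 5 * exp ρ := by
    have h1 : Δ ≤ a + 1 / 2 * b + L * s ^ 5 * ρ ^ 3 := by
      have := (abs_le.1 hT).2
      linarith
    calc θ * Δ ≤ θ * (a + 1 / 2 * b + L * s ^ 5 * ρ ^ 3) := by gcongr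
      _ = θ * (a + 1 / 2 * b) + (θ * L) * (s ^ 5 * ρ ^ 3) := by ring
      _ ≤ θ * (a + 1 / 2 * b) + 1 / 2 * (s ^ 5 * (6 * exp ρ)) := by gcongr
      _ = _ := by ring
  have hd : |Δ - a| ≤ 3 / 2 * (L * s ^ 3 * ρ ^ 2) := by
    have h1 : |Δ - a| ≤ |Δ - a - 1 / 2 * b| + 1 / 2 * |b| := by
      have := abs_add_le (Δ - a - 1 / 2 * b) (1 / 2 * b)
      rw [abs_mul, abs_of_pos (by norm_num : (0:ℝ) < 1 / 2)] at this
      simpa using this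
    have h2 : L * s ^ 5 * ρ ^ 3 ≤ L * s ^ 3 * ρ ^ 2 := by
      calc L * s ^ 5 * ρ ^ 3 = L * s ^ 3 * ρ ^ 2 * (s ^ 2 * ρ) := by ring
        _ ≤ L * s ^ 3 * ρ ^ 2 * 1 := by gcongr
        _ = _ := by ring
    linarith
  have hd2 : (Δ - a) ^ 2 ≤ (3 / 2 * (L * s ^ 3 * ρ ^ 2)) ^ 2 := sq_le_sq' (abs_le.1 hd).1 (abs_le.1 hd).2
  have ha2 : a ^ 2 ≤ (p * (s ^ 2 * ρ)) ^ 2 := sq_le_sq' (abs_le.1 ha).1 (abs_le.1 ha).2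
  have hΔ2 : Δ ^ 2 ≤ 2 * a ^ 2 + 2 * (Δ - a) ^ 2 := by nlinarith [sq_nonneg (Δ - 2 * a)]
  have t2 : (θ * Δ) ^ 2 ≤ 2 * θ ^ 2 * p ^ 2 * (s ^ 2 * ρ) ^ 2 + 27 * s ^ 5 * exp ρ := by
    calc (θ * Δ) ^ 2 = θ ^ 2 * Δ ^ 2 := by ring
      _ ≤ θ ^ 2 * (2 * (p * (s ^ 2 * ρ)) ^ 2 + 2 * (3 / 2 * (L * s ^ 3 * ρ ^ 2)) ^ 2) := by
        gcongr
        linarith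
      _ = 2 * θ ^ 2 * p ^ 2 * (s ^ 2 * ρ) ^ 2 + 9 / 2 * (θ * L) ^ 2 * (s ^ 6 * ρ ^ 4) := by ring
      _ ≤ 2 * θ ^ 2 * p ^ 2 * (s ^ 2 * ρ) ^ 2 + 9 / 2 * (1 / 2) ^ 2 * (s ^ 5 * (24 * exp ρ)) := by
        gcongr
      _ = _ := by ring
  have t3 : (1 - al) * |exp (θ * Δ) - 1| ≤ β * (48 * L + L ^ 2) * s ^ 5 * exp ρ := by
    calc (1 - al) * |exp (θ * Δ) - 1|
        ≤ (β * (2 * (L * s ^ 5 * ρ ^ 3) + 1 / 2 * L ^ 2 * s ^ 4 * ρ)) * (s * ρ) := by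
          apply mul_le_mul hal hA2 (abs_nonneg _) (by positivity)
      _ = β * (2 * L * (s ^ 6 * ρ ^ 4) + 1 / 2 * L ^ 2 * (s ^ 5 * ρ ^ 2)) := by ring
      _ ≤ β * (2 * L * (s ^ 5 * (24 * exp ρ)) + 1 / 2 * L ^ 2 * (s ^ 5 * (2 * exp ρ))) := by
        gcongr
      _ = _ := by ring
  calc _ ≤ (θ * (a + 1 / 2 * b) + 3 * s ^ 5 * exp ρ)
        + (2 * θ ^ 2 * p ^ 2 * (s ^ 2 * ρ) ^ 2 + 27 * s ^ 5 * exp ρ)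
        + β * (48 * L + L ^ 2) * s ^ 5 * exp ρ := by linarith
    _ = _ := by ring

theorem pm_num_off {s ρ L θ a b : ℝ} (hs : 0 < s)
    (hθ : 0 < θ) (hθ1 : θ ≤ 1) (hθL : θ * L ≤ 1 / 2) (hρs : 1 ≤ s * ρ)
    (ha : |a| ≤ L * s * ρ) (hb : |b| ≤ L * s ^ 3 * ρ ^ 2) :
    exp (θ * (1 / s)) ≤ θ * (a + 1 / 2 * b) + 200 * s ^ 5 * exp (2 * ρ) := by
  have hρ : 0 ≤ ρ := by
    by_contra h
    push Not at h
    nlinarith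
  obtain ⟨e2, e3, e4, e5⟩ := pm_pow_le_exp hρ
  have hee : exp ρ ≤ exp (2 * ρ) := exp_le_exp.2 (by linarith)
  have h5 : 1 ≤ (s * ρ) ^ 5 := one_le_pow₀ hρs
  have h1s : 1 / s ≤ ρ := by rw [div_le_iff₀ hs]; linarith
  have t1 : exp (θ * (1 / s)) ≤ 120 * s ^ 5 * exp (2 * ρ) := by
    have h1 : exp (θ * (1 / s)) ≤ exp ρ := by
      apply exp_le_exp.2
      calc θ * (1 / s) ≤ 1 * ρ := by gcongr
        _ = ρ := one_mul _
    calc exp (θ * (1 / s)) ≤ exp ρ * 1 := by linarith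
      _ ≤ exp ρ * (s * ρ) ^ 5 := by gcongr
      _ = s ^ 5 * exp ρ * ρ ^ 5 := by ring
      _ ≤ s ^ 5 * exp ρ * (120 * exp ρ) := by gcongr
      _ = 120 * s ^ 5 * (exp ρ * exp ρ) := by ring
      _ = _ := by rw [← exp_add]; ring_nf
  have t2 : -(θ * a) ≤ 60 * s ^ 5 * exp (2 * ρ) := by
    calc -(θ * a) = θ * (-a) := by ring
      _ ≤ θ * (L * s * ρ) := by
        gcongr
        linarith [neg_abs_le a]
      _ = (θ * L) * (s * ρ) := by ring
      _ ≤ 1 / 2 * (s * ρ) := by gcongr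
      _ ≤ 1 / 2 * (s * ρ) ^ 5 := by
        gcongr
        exact le_self_pow₀ hρs (by norm_num)
      _ = 1 / 2 * s ^ 5 * ρ ^ 5 := by ring
      _ ≤ 1 / 2 * s ^ 5 * (120 * exp (2 * ρ)) := by gcongr; linarith
      _ = _ := by ring
  have t3 : -(θ * (1 / 2 * b)) ≤ 6 * s ^ 5 * exp (2 * ρ) := by
    calc -(θ * (1 / 2 * b)) = θ * (1 / 2 * -b) := by ring
      _ ≤ θ * (1 / 2 * (L * s ^ 3 * ρ ^ 2)) := by
        gcongr
        linarith [neg_abs_le b]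
      _ = (θ * L) * (1 / 2 * s ^ 3 * ρ ^ 2 * 1 ) := by ring
      _ ≤ 1 / 2 * (1 / 2 * s ^ 3 * ρ ^ 2 * (s * ρ) ^ 2) := by
        gcongr
        exact one_le_pow₀ hρs
      _ = 1 / 4 * s ^ 5 * ρ ^ 4 := by ring
      _ ≤ 1 / 4 * s ^ 5 * (24 * exp (2 * ρ)) := by gcongr; linarith
      _ = _ := by ring
  have : 0 < s ^ 5 * exp (2 * ρ) := by positivity
  nlinarith

theorem pm_accept_lb {n : ℕ} {β h : ℝ} (hβ : 0 < β) (hh : 0 < h) (U : Euc n → ℝ) (x y : Euc n) :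
    1 - accept n β h U x y ≤
      β * |U y - U x - 1 / 2 * (fderiv ℝ U x (y - x) + fderiv ℝ U y (y - x))|
      + β * h / 4 * |‖fderiv ℝ U y‖ ^ 2 - ‖fderiv ℝ U x‖ ^ 2| := by
  set ℓ := -β * (U y - U x - 1 / 2 * (fderiv ℝ U x (y - x) + fderiv ℝ U y (y - x)))
      - β * h / 4 * (‖fderiv ℝ U y‖ ^ 2 - ‖fderiv ℝ U x‖ ^ 2) with hℓ
  have hratio : (eulerDensity n β h U y x * exp (-β * U y)) /
         (eulerDensity n β h U x y * exp (-β * U x)) = exp ℓ := by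
    unfold eulerDensity
    have hc : 0 < (4 * π * β⁻¹ * h) ^ (-(n : ℝ) / 2) := by positivity
    generalize (4 * π * β⁻¹ * h) ^ (-(n : ℝ) / 2) = cc at hc ⊢
    rw [mul_assoc cc, mul_assoc cc, mul_div_mul_left _ _ hc.ne', ← exp_add, ← exp_add, ← exp_sub]
    congr 1
    have n1 : ‖x - y + h • gradient U y‖ ^ 2
        = ‖y - x‖ ^ 2 - 2 * h * fderiv ℝ U y (y - x) + h ^ 2 * ‖fderiv ℝ U y‖ ^ 2 := by
      rw [norm_add_sq_real, norm_sub_rev, inner_smul_right, norm_smul, pm_grad_norm,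
        real_inner_comm, pm_grad_inner, ← neg_sub y x, map_neg, mul_pow, norm_eq_abs, sq_abs]
      ring
    have n2 : ‖y - x + h • gradient U x‖ ^ 2
        = ‖y - x‖ ^ 2 + 2 * h * fderiv ℝ U x (y - x) + h ^ 2 * ‖fderiv ℝ U x‖ ^ 2 := by
      rw [norm_add_sq_real, inner_smul_right, norm_smul, pm_grad_norm,
        real_inner_comm, pm_grad_inner, mul_pow, norm_eq_abs, sq_abs]
      ring
    rw [n1, n2, hℓ]
    field_simp
    ring
  have h1 : 1 - accept n β h U x y ≤ |ℓ| := by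
    unfold accept
    rw [hratio]
    rcases le_total 1 (exp ℓ) with h | h
    · rw [min_eq_left h]; simp
    · rw [min_eq_right h]
      have := add_one_le_exp ℓ
      linarith [neg_abs_le ℓ]
  refine h1.trans ?_
  rw [hℓ]
  refine (abs_sub _ _).trans ?_
  rw [abs_mul, abs_mul, abs_neg, abs_of_pos hβ, abs_of_pos (by positivity : 0 < β * h / 4)]

theorem pm_accept_mem {n : ℕ} {β h : ℝ} (hβ : 0 < β) (hh : 0 < h) (U : Euc n → ℝ) (x y : Euc n) :
    0 ≤ accept n β h U x y ∧ accept n β h U x y ≤ 1 := by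
  unfold accept eulerDensity
  exact ⟨le_min zero_le_one (by positivity), min_le_left _ _⟩

theorem pm_h_eq {s : ℝ} (hs : 0 < s) : (1:ℝ) * (s ^ 4) ^ (-(1:ℝ) / 4) = 1 / s := by
  rw [← rpow_natCast, ← rpow_mul hs.le, one_mul]
  norm_num
  rw [rpow_neg_one]

theorem pm_mem_R {n : ℕ} {U : Euc n → ℝ} {s : ℝ} (hs : 0 < s) (x : Euc n) :
    x ∈ Rset n (s ^ 4) 1 U ↔ U x < 1 / s := by
  unfold Rset
  rw [Set.mem_ofPred_eq, pm_h_eq hs]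

theorem pm_acceptBar_mem {n : ℕ} {β h E : ℝ} (hβ : 0 < β) (hh : 0 < h) (U : Euc n → ℝ)
    (x y : Euc n) : 0 ≤ acceptBar n β h E U x y ∧ acceptBar n β h E U x y ≤ 1 := by
  unfold acceptBar
  split_ifs
  · exact pm_accept_mem hβ hh U x y
  · norm_num

theorem pm_al_aux {al t : ℝ} (h : al ≤ 1) : al * t ≤ t + (1 - al) * |t| := by
  have := mul_nonneg (sub_nonneg.2 h) (by linarith [neg_abs_le t] : 0 ≤ t + |t|)
  linarith

set_option maxHeartbeats 1000000 in
theorem pm_pointwise {n : ℕ} {β : ℝ} (hβ : 0 < β) {U : Euc n → ℝ} (hs : ContDiff ℝ 4 U)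
    (h1 : ∀ x, 1 ≤ U x) {C : ℝ} (hC0 : 0 < C)
    (hC : ∀ w, ‖fderiv ℝ U w‖ ≤ C * U w ∧ ‖fderiv ℝ (fderiv ℝ U) w‖ ≤ C * U w ∧
      ‖fderiv ℝ (fderiv ℝ (fderiv ℝ U)) w‖ ≤ C * U w)
    {L : ℝ} (hL : L = C * exp C) {θ : ℝ} (hθ : 0 < θ) (hθ1 : θ ≤ 1) (hθL : θ * L ≤ 1 / 2)
    {s : ℝ} (hs0 : 0 < s) (hs1 : s ≤ 1) (x : Euc n) (hx : U x < 1 / s) (y : Euc n) :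
    acceptBar n β (s ^ 4) 1 U x y * (exp (θ * (U y - U x)) - 1) ≤
      θ * (fderiv ℝ U x (y - x) + 1 / 2 * fderiv ℝ (fderiv ℝ U) x (y - x) (y - x))
      + 2 * θ ^ 2 * ‖fderiv ℝ U x‖ ^ 2 * ‖y - x‖ ^ 2
      + (200 + β * (48 * L + L ^ 2)) * s ^ 5 * exp (2 * (‖y - x‖ / s ^ 2)) := by
  have hL0 : 0 < L := by rw [hL]; positivity
  have hCL : C ≤ L := by
    rw [hL]
    nlinarith [one_le_exp hC0.le]
  have hUpos : ∀ x, 0 < U x := fun x => lt_of_lt_of_le one_pos (h1 x)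
  set ρ := ‖y - x‖ / s ^ 2 with hρdef
  have hr : ‖y - x‖ = s ^ 2 * ρ := by rw [hρdef]; field_simp
  have hρ : 0 ≤ ρ := by positivity
  set D := fderiv ℝ U x with hD
  set A := fderiv ℝ (fderiv ℝ U) x with hA
  have hUL : C * U x ≤ L / s := by
    calc C * U x ≤ L * (1 / s) := mul_le_mul hCL hx.le (hUpos x).le hL0.le
      _ = _ := by ring
  have hDn : ‖D‖ ≤ L / s := (hC x).1.trans hUL
  have hAn : ‖A‖ ≤ L / s := (hC x).2.1.trans hUL
  have ha : |D (y - x)| ≤ ‖D‖ * (s ^ 2 * ρ) := by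
    rw [← hr]; exact D.le_opNorm _
  have ha' : |D (y - x)| ≤ L * s * ρ := by
    refine ha.trans ?_
    calc ‖D‖ * (s ^ 2 * ρ) ≤ L / s * (s ^ 2 * ρ) := by gcongr
      _ = _ := by field_simp
  have hb : |A (y - x) (y - x)| ≤ L * s ^ 3 * ρ ^ 2 := by
    have := A.le_opNorm₂ (y - x) (y - x)
    rw [norm_eq_abs, hr] at this
    refine this.trans ?_
    calc ‖A‖ * (s ^ 2 * ρ) * (s ^ 2 * ρ) ≤ L / s * (s ^ 2 * ρ) * (s ^ 2 * ρ) := by gcongr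
      _ = _ := by field_simp
  have hbar := pm_acceptBar_mem (E := 1) hβ (by positivity : 0 < s ^ 4) U x y
  have hee : exp ρ ≤ exp (2 * ρ) := exp_le_exp.2 (by linarith)
  have hextra : 0 ≤ β * (48 * L + L ^ 2) := by positivity
  rcases le_total (s * ρ) 1 with hc | hc
  · skip
    have hrs : ‖y - x‖ ≤ 1 := by rw [hr]; nlinarith
    have hM : ∀ w, ‖w - x‖ ≤ ‖y - x‖ → ‖fderiv ℝ U w‖ ≤ L / s ∧
        ‖fderiv ℝ (fderiv ℝ U) w‖ ≤ L / s ∧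
        ‖fderiv ℝ (fderiv ℝ (fderiv ℝ U)) w‖ ≤ L / s := by
      intro w hw
      have hg := pm_U_growth (hs.differentiable (by norm_num)) h1 (fun w => (hC w).1) x w
      have hw1 : C * U w ≤ L / s := by
        calc C * U w ≤ C * (U x * exp (C * ‖w - x‖)) := by gcongr
          _ ≤ C * (1 / s * exp (C * 1)) := by
            gcongr
            exact hw.trans hrs
          _ = L / s := by rw [hL]; ring_nf
      exact ⟨(hC w).1.trans hw1, (hC w).2.1.trans hw1, (hC w).2.2.trans hw1⟩
    obtain ⟨T0, T1, T2, T3⟩ := pm_taylor hs x y hM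
    have hDy : ‖fderiv ℝ U y‖ ≤ L / s := (hM y le_rfl).1
    rw [← hD] at T1 T2 T3
    rw [← hA] at T2 T3
    have hΔ : |U y - U x| ≤ L * s * ρ := by
      refine T0.trans (le_of_eq ?_)
      rw [hr]; field_simp
    have e3 : L / s * ‖y - x‖ ^ 3 = L * s ^ 5 * ρ ^ 3 := by rw [hr]; field_simp
    rw [e3] at T3
    have T2' : |fderiv ℝ U y (y - x) - D (y - x) - A (y - x) (y - x)| ≤ L * s ^ 5 * ρ ^ 3 := by
      have := (fderiv ℝ U y - D - A (y - x)).le_opNorm (y - x)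
      rw [← e3]
      refine this.trans ?_
      calc _ ≤ L / s * ‖y - x‖ ^ 2 * ‖y - x‖ := by gcongr
        _ = _ := by ring
    have hal : 1 - accept n β (s ^ 4) U x y ≤
        β * (2 * (L * s ^ 5 * ρ ^ 3) + 1 / 2 * L ^ 2 * s ^ 4 * ρ) := by
      refine (pm_accept_lb hβ (by positivity) U x y).trans ?_
      rw [← hD]
      have k1 : |U y - U x - 1 / 2 * (D (y - x) + fderiv ℝ U y (y - x))|
          ≤ 2 * (L * s ^ 5 * ρ ^ 3) := by
        rw [abs_le] at T3 T2' ⊢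
        constructor <;> linarith [T3.1, T3.2, T2'.1, T2'.2]
      have k2 : |‖fderiv ℝ U y‖ ^ 2 - ‖D‖ ^ 2| ≤ 2 * L ^ 2 * ρ := by
        have k3 : |‖fderiv ℝ U y‖ - ‖D‖| ≤ L / s * ‖y - x‖ := (abs_norm_sub_norm_le _ _).trans T1
        calc |‖fderiv ℝ U y‖ ^ 2 - ‖D‖ ^ 2|
            = |‖fderiv ℝ U y‖ - ‖D‖| * (‖fderiv ℝ U y‖ + ‖D‖) := by
              rw [sq_sub_sq, abs_mul, mul_comm, abs_of_nonneg
                (by positivity : 0 ≤ ‖fderiv ℝ U y‖ + ‖D‖)]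
          _ ≤ (L / s * ‖y - x‖) * (L / s + L / s) := by gcongr
          _ = 2 * L ^ 2 * ρ := by rw [hr]; field_simp; ring
      calc _ ≤ β * (2 * (L * s ^ 5 * ρ ^ 3)) + β * s ^ 4 / 4 * (2 * L ^ 2 * ρ) := by gcongr
        _ = _ := by ring
    have main := pm_num_on (p := ‖D‖) hs0 hs1 hρ hL0 hθ hβ hθL hc ha hb T3 hΔ hal
    rw [← hr] at main
    have hfin : (30 + β * (48 * L + L ^ 2)) * s ^ 5 * exp ρ ≤
        (200 + β * (48 * L + L ^ 2)) * s ^ 5 * exp (2 * ρ) := by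
      gcongr
      norm_num
    have hleft : acceptBar n β (s ^ 4) 1 U x y * (exp (θ * (U y - U x)) - 1) ≤
        exp (θ * (U y - U x)) - 1 +
          (1 - accept n β (s ^ 4) U x y) * |exp (θ * (U y - U x)) - 1| := by
      have hm := pm_accept_mem hβ (by positivity : 0 < s ^ 4) U x y
      unfold acceptBar
      split_ifs with hmem
      · exact pm_al_aux hm.2
      · have hy : ¬ U y < 1 / s := fun hy => hmem ⟨(pm_mem_R hs0 x).2 hx, (pm_mem_R hs0 y).2 hy⟩
        push Not at hy
        have : 1 ≤ exp (θ * (U y - U x)) := one_le_exp (mul_nonneg hθ.le (by linarith))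
        have h3 := mul_nonneg (sub_nonneg.2 hm.2) (abs_nonneg (exp (θ * (U y - U x)) - 1))
        linarith
    linarith
  · skip
    have main := pm_num_off hs0 hθ hθ1 hθL hc ha' hb
    have hleft : acceptBar n β (s ^ 4) 1 U x y * (exp (θ * (U y - U x)) - 1) ≤
        exp (θ * (1 / s)) := by
      unfold acceptBar
      split_ifs with hmem
      · have hm := pm_accept_mem hβ (by positivity : 0 < s ^ 4) U x y
        have hy := (pm_mem_R hs0 y).1 hmem.2
        have h3 : exp (θ * (U y - U x)) ≤ exp (θ * (1 / s)) := by
          apply exp_le_exp.2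
          gcongr
          linarith [hUpos x]
        calc _ ≤ accept n β (s ^ 4) U x y * exp (θ * (U y - U x)) := by
              apply mul_le_mul_of_nonneg_left _ hm.1
              linarith
          _ ≤ 1 * exp (θ * (1 / s)) := by
              apply mul_le_mul hm.2 h3 (exp_pos _).le zero_le_one
          _ = _ := one_mul _
      · rw [zero_mul]; positivity
    have h4 : 0 ≤ 2 * θ ^ 2 * ‖D‖ ^ 2 * ‖y - x‖ ^ 2 := by positivity
    have h5 : 0 ≤ β * (48 * L + L ^ 2) * (s ^ 5 * exp (2 * ρ)) := by positivity
    linarith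

theorem pm_gauss_total {n : ℕ} {b : ℝ} (hb : 0 < b) (A : Euc n →L[ℝ] Euc n →L[ℝ] ℝ)
    (l : Euc n →L[ℝ] ℝ) (k0 a1 a2 a3 : ℝ) :
    Integrable (fun z : Euc n => (π / b) ^ (-(n : ℝ) / 2) * exp (-b * ‖z‖ ^ 2) *
      (k0 + l z + a1 * A z z + a2 * ‖z‖ ^ 2 + a3 * exp (b / 2 * ‖z‖ ^ 2))) ∧
    ∫ z : Euc n, (π / b) ^ (-(n : ℝ) / 2) * exp (-b * ‖z‖ ^ 2) *
      (k0 + l z + a1 * A z z + a2 * ‖z‖ ^ 2 + a3 * exp (b / 2 * ‖z‖ ^ 2))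
      = k0 + a1 * (1 / (2 * b) *
          ∑ i, A (EuclideanSpace.single i 1) (EuclideanSpace.single i 1))
        + a2 * (1 / (2 * b) * n) + a3 * 2 ^ ((n : ℝ) / 2) := by
  have i0 := (pm_gauss_integrable (n := n) hb).const_mul k0
  have i1 := pm_gauss_lin_int hb l
  have i2 := (pm_gauss_quad_int hb A).const_mul a1
  have i3 := (pm_gauss_norm_sq_int (n := n) hb).const_mul a2
  have i4 := (pm_gauss_integrable (n := n) (half_pos hb)).const_mul a3
  have e : (fun z : Euc n => (π / b) ^ (-(n : ℝ) / 2) * exp (-b * ‖z‖ ^ 2) *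
      (k0 + l z + a1 * A z z + a2 * ‖z‖ ^ 2 + a3 * exp (b / 2 * ‖z‖ ^ 2)))
      = fun z => (π / b) ^ (-(n : ℝ) / 2) * (k0 * exp (-b * ‖z‖ ^ 2) + exp (-b * ‖z‖ ^ 2) * l z
        + a1 * (exp (-b * ‖z‖ ^ 2) * A z z) + a2 * (exp (-b * ‖z‖ ^ 2) * ‖z‖ ^ 2)
        + a3 * exp (-(b / 2) * ‖z‖ ^ 2)) := by
    ext z
    have : exp (-(b / 2) * ‖z‖ ^ 2) = exp (-b * ‖z‖ ^ 2) * exp (b / 2 * ‖z‖ ^ 2) := by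
      rw [← exp_add]; ring_nf
    rw [this]; ring
  rw [e]
  refine ⟨((((i0.add i1).add i2).add i3).add i4).const_mul _, ?_⟩
  have j1 : Integrable (fun z : Euc n => k0 * exp (-b * ‖z‖ ^ 2) + exp (-b * ‖z‖ ^ 2) * l z) :=
    i0.add i1
  have j2 : Integrable (fun z : Euc n => k0 * exp (-b * ‖z‖ ^ 2) + exp (-b * ‖z‖ ^ 2) * l z
      + a1 * (exp (-b * ‖z‖ ^ 2) * A z z)) := j1.add i2
  have j3 : Integrable (fun z : Euc n => k0 * exp (-b * ‖z‖ ^ 2) + exp (-b * ‖z‖ ^ 2) * l z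
      + a1 * (exp (-b * ‖z‖ ^ 2) * A z z) + a2 * (exp (-b * ‖z‖ ^ 2) * ‖z‖ ^ 2)) := j2.add i3
  rw [integral_const_mul, integral_add j3 i4, integral_add j2 i3, integral_add j1 i2,
    integral_add i0 i1]
  rw [integral_const_mul, integral_const_mul, integral_const_mul, integral_const_mul,
    pm_gauss_lin, pm_gauss_quad hb, pm_gauss_norm_sq hb,
    GaussianFourier.integral_rexp_neg_mul_sq_norm hb,
    GaussianFourier.integral_rexp_neg_mul_sq_norm (half_pos hb)]
  have f1 : (π / b) ^ (-(n : ℝ) / 2) * (π / b) ^ ((n : ℝ) / 2) = 1 := by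
    rw [← rpow_add (by positivity)]
    rw [show -(n : ℝ) / 2 + n / 2 = 0 by ring, rpow_zero]
  have f2 : (π / (b / 2)) ^ ((n : ℝ) / 2) = 2 ^ ((n : ℝ) / 2) * (π / b) ^ ((n : ℝ) / 2) := by
    rw [← mul_rpow (by positivity) (by positivity)]
    congr 1
    field_simp
  simp only [finrank_euclideanSpace, Fintype.card_fin]
  rw [f2]
  generalize (π / b) ^ (-(n : ℝ) / 2) = P at *
  generalize (π / b) ^ ((n : ℝ) / 2) = Q at *
  generalize (2:ℝ) ^ ((n : ℝ) / 2) = R at *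
  generalize ∑ i, A (EuclideanSpace.single i 1) (EuclideanSpace.single i 1) = S at *
  linear_combination (k0 + a1 * (1 / (2 * b) * S) + a2 * (1 / (2 * b) * n) + a3 * R) * f1

theorem pm_euler_eq {n : ℕ} {β h : ℝ} (hβ : 0 < β) (hh : 0 < h) (U : Euc n → ℝ) (x y : Euc n) :
    eulerDensity n β h U x y = (π / (β / (4 * h))) ^ (-(n : ℝ) / 2) *
      exp (-(β / (4 * h)) * ‖y - x + h • gradient U x‖ ^ 2) := by
  unfold eulerDensity
  have h1 : 4 * π * β⁻¹ * h = π / (β / (4 * h)) := by field_simp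
  have h2 : -‖y - x + h • gradient U x‖ ^ 2 / (4 * β⁻¹ * h)
      = -(β / (4 * h)) * ‖y - x + h • gradient U x‖ ^ 2 := by field_simp
  rw [h1, h2]

theorem pm_euler_nonneg {n : ℕ} {β h : ℝ} (hβ : 0 < β) (hh : 0 < h) (U : Euc n → ℝ) (x y : Euc n) :
    0 ≤ eulerDensity n β h U x y := by
  unfold eulerDensity; positivity

theorem pm_euler_int {n : ℕ} {β h : ℝ} (hβ : 0 < β) (hh : 0 < h) (U : Euc n → ℝ) (x : Euc n) :
    Integrable (fun y => eulerDensity n β h U x y) ∧ ∫ y, eulerDensity n β h U x y = 1 := by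
  have hb : 0 < β / (4 * h) := by positivity
  obtain ⟨g1, g2⟩ := pm_gauss_total (n := n) hb 0 0 1 0 0 0
  simp only [zero_apply, add_zero, zero_mul, mul_one] at g1 g2
  have e : (fun y => eulerDensity n β h U x y) = fun y => (fun z : Euc n =>
      (π / (β / (4 * h))) ^ (-(n : ℝ) / 2) * exp (-(β / (4 * h)) * ‖z‖ ^ 2))
        (y + (-x + h • gradient U x)) := by
    ext y
    rw [pm_euler_eq hβ hh, ← add_assoc, ← sub_eq_add_neg]
  rw [e]
  refine ⟨g1.comp_add_right _, ?_⟩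
  rw [integral_add_right_eq_self (fun z : Euc n =>
      (π / (β / (4 * h))) ^ (-(n : ℝ) / 2) * exp (-(β / (4 * h)) * ‖z‖ ^ 2)), g2]

theorem pm_shift_bound {n : ℕ} {β : ℝ} (hβ : 0 < β) {L θ s Ce : ℝ} (hs0 : 0 < s)
    (hCe : 0 ≤ Ce) (hs1 : s ≤ 1) (D : Euc n →L[ℝ] ℝ) (A : Euc n →L[ℝ] Euc n →L[ℝ] ℝ) (g : Euc n)
    (hDg : ∀ v, inner ℝ g v = D v) (hg : ‖g‖ = ‖D‖) (hL : ‖D‖ ≤ L / s) (z : Euc n) :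
    θ * (D (z - s ^ 4 • g) + 1 / 2 * A (z - s ^ 4 • g) (z - s ^ 4 • g))
      + 2 * θ ^ 2 * ‖D‖ ^ 2 * ‖z - s ^ 4 • g‖ ^ 2
      + Ce * s ^ 5 * exp (2 * (‖z - s ^ 4 • g‖ / s ^ 2)) ≤
    (-(θ * s ^ 4 * ‖D‖ ^ 2) + 1 / 2 * θ * (s ^ 4) ^ 2 * A g g + 2 * θ ^ 2 * ‖D‖ ^ 4 * (s ^ 4) ^ 2)
      + ((θ - 4 * θ ^ 2 * ‖D‖ ^ 2 * s ^ 4) • D - (1 / 2 * θ * s ^ 4) • (A g + A.flip g)) z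
      + (1 / 2 * θ) * A z z + (2 * θ ^ 2 * ‖D‖ ^ 2) * ‖z‖ ^ 2
      + (Ce * s ^ 5 * exp (2 * L + 8 / β)) * exp (β / (4 * s ^ 4) / 2 * ‖z‖ ^ 2) := by
  have hDgg : D g = ‖D‖ ^ 2 := by rw [← hDg, real_inner_self_eq_norm_sq, hg]
  have hn : ‖z - s ^ 4 • g‖ ^ 2 = ‖z‖ ^ 2 - 2 * s ^ 4 * D z + (s ^ 4) ^ 2 * ‖D‖ ^ 2 := by
    rw [norm_sub_sq_real, inner_smul_right, real_inner_comm, hDg, norm_smul, hg, mul_pow,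
      norm_eq_abs, sq_abs]
    ring
  have hexp : exp (2 * (‖z - s ^ 4 • g‖ / s ^ 2)) ≤
      exp (2 * L + 8 / β) * exp (β / (4 * s ^ 4) / 2 * ‖z‖ ^ 2) := by
    rw [← exp_add]
    apply exp_le_exp.2
    have h1 : ‖z - s ^ 4 • g‖ ≤ ‖z‖ + s ^ 4 * (L / s) := by
      refine (norm_sub_le _ _).trans ?_
      rw [norm_smul, norm_eq_abs, abs_of_pos (by positivity), hg]
      gcongr
    have h2 : ‖z - s ^ 4 • g‖ / s ^ 2 ≤ ‖z‖ / s ^ 2 + L := by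
      have hL0 : 0 ≤ L := by
        by_contra hneg
        push Not at hneg
        have := div_neg_of_neg_of_pos hneg hs0
        linarith [norm_nonneg D]
      calc ‖z - s ^ 4 • g‖ / s ^ 2 ≤ (‖z‖ + s ^ 4 * (L / s)) / s ^ 2 := by gcongr
        _ = ‖z‖ / s ^ 2 + L * s := by field_simp
        _ ≤ ‖z‖ / s ^ 2 + L * 1 := by gcongr
        _ = _ := by ring
    set ζ := ‖z‖ / s ^ 2 with hζ
    have h3 : β / (4 * s ^ 4) / 2 * ‖z‖ ^ 2 = β / 8 * ζ ^ 2 := by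
      rw [hζ]; field_simp; ring
    rw [h3]
    have h4 : 2 * ζ ≤ 8 / β + β / 8 * ζ ^ 2 := by
      have : 0 ≤ β / 8 * (ζ - 8 / β) ^ 2 := by positivity
      have e : β / 8 * (ζ - 8 / β) ^ 2 = β / 8 * ζ ^ 2 - 2 * ζ + 8 / β := by field_simp; ring
      linarith
    linarith
  have hA : A (z - s ^ 4 • g) (z - s ^ 4 • g) =
      A z z - s ^ 4 * (A g z + A z g) + (s ^ 4) ^ 2 * A g g := by
    simp only [map_sub, map_smul, _root_.sub_apply, _root_.smul_apply, smul_eq_mul]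
    ring
  have hD2 : D (z - s ^ 4 • g) = D z - s ^ 4 * ‖D‖ ^ 2 := by
    simp only [map_sub, map_smul, smul_eq_mul, hDgg]
  have hlast := mul_le_mul_of_nonneg_left hexp (by positivity : 0 ≤ Ce * s ^ 5)
  rw [hn, hA, hD2]
  simp only [_root_.sub_apply, _root_.smul_apply, _root_.add_apply, smul_eq_mul,
    ContinuousLinearMap.flip_apply]
  rw [← mul_assoc (Ce * s ^ 5)] at hlast
  refine (add_le_add_right hlast _).trans (le_of_eq ?_)
  ring

theorem pm_grad_meas {n : ℕ} {U : Euc n → ℝ} (hs : ContDiff ℝ 4 U) :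
    Measurable (fun y => gradient U y) := by
  have c1 : Continuous (fderiv ℝ U) := hs.continuous_fderiv (by norm_num)
  unfold gradient
  exact ((InnerProductSpace.toDual ℝ (Euc n)).symm.continuous.comp c1).measurable

theorem pm_euler_meas {n : ℕ} {β h : ℝ} {U : Euc n → ℝ} (x : Euc n) :
    Measurable (fun y => eulerDensity n β h U x y) := by
  unfold eulerDensity
  fun_prop

theorem pm_euler_meas2 {n : ℕ} {β h : ℝ} {U : Euc n → ℝ} (hs : ContDiff ℝ 4 U) (x : Euc n) :
    Measurable (fun y => eulerDensity n β h U y x) := by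
  have := pm_grad_meas hs
  unfold eulerDensity
  fun_prop

theorem pm_R_meas {n : ℕ} {h E : ℝ} {U : Euc n → ℝ} (hs : ContDiff ℝ 4 U) :
    MeasurableSet (Rset n h E U) :=
  measurableSet_lt hs.continuous.measurable measurable_const

theorem pm_acceptBar_meas {n : ℕ} {β h E : ℝ} {U : Euc n → ℝ} (hs : ContDiff ℝ 4 U) (x : Euc n) :
    Measurable (fun y => acceptBar n β h E U x y) := by
  have hU := hs.continuous.measurable
  have h1 := pm_euler_meas (β := β) (h := h) (U := U) x
  have h2 := pm_euler_meas2 (β := β) (h := h) hs x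
  unfold acceptBar
  refine Measurable.ite ?_ ?_ measurable_const
  · by_cases hx : x ∈ Rset n h E U
    · simpa [hx] using pm_R_meas hs
    · simp [hx]
  · unfold accept
    exact measurable_const.min ((h2.mul (by fun_prop)).div (h1.mul_const _))

/-- The increment integrand is integrable. -/
theorem pm_F_int {n : ℕ} {β h E : ℝ} (hβ : 0 < β) (hh : 0 < h) {U : Euc n → ℝ}
    (hs : ContDiff ℝ 4 U) (h1 : ∀ x, 1 ≤ U x) {θ : ℝ} (hθ : 0 < θ) (x : Euc n) :
    Integrable (fun y => eulerDensity n β h U x y *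
      (acceptBar n β h E U x y * (exp (θ * (U y - U x)) - 1))) := by
  have hU := hs.continuous.measurable
  have h0 := pm_acceptBar_meas (β := β) (h := h) (E := E) hs x
  refine (pm_euler_int hβ hh U x).1.mul_bdd (c := exp (θ * (E * h ^ (-(1:ℝ) / 4) - U x)) + 1) ?_ ?_
  · exact (h0.mul (by fun_prop)).aestronglyMeasurable
  · refine Eventually.of_forall fun y => ?_
    have hb := pm_acceptBar_mem (E := E) hβ hh U x y
    rw [norm_eq_abs, abs_mul, abs_of_nonneg hb.1]
    by_cases hy : y ∈ Rset n h E U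
    · have hy' : U y < E * h ^ (-(1:ℝ) / 4) := hy
      have h3 : exp (θ * (U y - U x)) ≤ exp (θ * (E * h ^ (-(1:ℝ) / 4) - U x)) := by
        gcongr
      have h4 : |exp (θ * (U y - U x)) - 1| ≤ exp (θ * (E * h ^ (-(1:ℝ) / 4) - U x)) + 1 := by
        rw [abs_le]
        constructor <;> linarith [exp_pos (θ * (U y - U x))]
      calc _ ≤ 1 * |exp (θ * (U y - U x)) - 1| := by gcongr; exact hb.2
        _ ≤ _ := by rw [one_mul]; exact h4
    · have : acceptBar n β h E U x y = 0 := by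
        unfold acceptBar
        rw [if_neg (fun h => hy h.2)]
      rw [this, zero_mul]
      positivity

theorem pm_F_bound {n : ℕ} {β : ℝ} (hβ : 0 < β) {U : Euc n → ℝ} (hs : ContDiff ℝ 4 U)
    (h1 : ∀ x, 1 ≤ U x) {C : ℝ} (hC0 : 0 < C)
    (hC : ∀ w, ‖fderiv ℝ U w‖ ≤ C * U w ∧ ‖fderiv ℝ (fderiv ℝ U) w‖ ≤ C * U w ∧
      ‖fderiv ℝ (fderiv ℝ (fderiv ℝ U)) w‖ ≤ C * U w)
    {L : ℝ} (hL : L = C * exp C) {θ : ℝ} (hθ : 0 < θ) (hθ1 : θ ≤ 1) (hθL : θ * L ≤ 1 / 2)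
    {s : ℝ} (hs0 : 0 < s) (hs1 : s ≤ 1) (x : Euc n) (hx : U x < 1 / s) :
    ∫ y, eulerDensity n β (s ^ 4) U x y *
      (acceptBar n β (s ^ 4) 1 U x y * (exp (θ * (U y - U x)) - 1)) ≤
    θ * s ^ 4 * (-‖gradient U x‖ ^ 2 + lapl U x / β
      + (4 * θ * n / β + 2 * θ * L ^ 2) * ‖gradient U x‖ ^ 2)
      + ((200 + β * (48 * L + L ^ 2)) * exp (2 * L + 8 / β) * 2 ^ ((n : ℝ) / 2) + L ^ 3) * s ^ 5 := by
  have hL0 : 0 < L := by rw [hL]; positivity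
  have hCL : C ≤ L := by
    rw [hL]
    nlinarith [one_le_exp hC0.le]
  have hUpos : ∀ x, 0 < U x := fun x => lt_of_lt_of_le one_pos (h1 x)
  have hUL : C * U x ≤ L / s := by
    calc C * U x ≤ L * (1 / s) := mul_le_mul hCL hx.le (hUpos x).le hL0.le
      _ = _ := by ring
  have hDn : ‖fderiv ℝ U x‖ ≤ L / s := (hC x).1.trans hUL
  have hAn : ‖fderiv ℝ (fderiv ℝ U) x‖ ≤ L / s := (hC x).2.1.trans hUL
  have hh : 0 < s ^ 4 := by positivity
  have hb : 0 < β / (4 * s ^ 4) := by positivity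
  have hFint := pm_F_int (E := 1) hβ hh hs h1 hθ x
  have hpt := pm_pointwise hβ hs h1 hC0 hC hL hθ hθ1 hθL hs0 hs1 x hx
  have hlap : lapl U x = ∑ i, fderiv ℝ (fderiv ℝ U) x (EuclideanSpace.single i 1)
      (EuclideanSpace.single i 1) := by
    unfold lapl
    simp only [pm_D2_eq]
  have hgn := pm_grad_norm U x
  have hsb := pm_shift_bound (θ := θ) (Ce := 200 + β * (48 * L + L ^ 2)) hβ hs0 (by positivity) hs1
    (fderiv ℝ U x) (fderiv ℝ (fderiv ℝ U) x) (gradient U x) (pm_grad_inner U x) hgn hDn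
  set D := fderiv ℝ U x with hD
  set A := fderiv ℝ (fderiv ℝ U) x with hA
  set g := gradient U x with hg
  set Ce := 200 + β * (48 * L + L ^ 2) with hCe
  set k0 := -(θ * s ^ 4 * ‖D‖ ^ 2) + 1 / 2 * θ * (s ^ 4) ^ 2 * A g g
    + 2 * θ ^ 2 * ‖D‖ ^ 4 * (s ^ 4) ^ 2 with hk0
  set l := (θ - 4 * θ ^ 2 * ‖D‖ ^ 2 * s ^ 4) • D - (1 / 2 * θ * s ^ 4) • (A g + A.flip g) with hl
  obtain ⟨g1, g2⟩ := pm_gauss_total (n := n) hb A l k0 (1 / 2 * θ) (2 * θ ^ 2 * ‖D‖ ^ 2)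
    (Ce * s ^ 5 * exp (2 * L + 8 / β))
  set G := fun z : Euc n => (π / (β / (4 * s ^ 4))) ^ (-(n : ℝ) / 2) *
      exp (-(β / (4 * s ^ 4)) * ‖z‖ ^ 2) *
      (k0 + l z + 1 / 2 * θ * A z z + 2 * θ ^ 2 * ‖D‖ ^ 2 * ‖z‖ ^ 2
        + Ce * s ^ 5 * exp (2 * L + 8 / β) * exp (β / (4 * s ^ 4) / 2 * ‖z‖ ^ 2)) with hG
  have hmono : ∫ y, eulerDensity n β (s ^ 4) U x y *
      (acceptBar n β (s ^ 4) 1 U x y * (exp (θ * (U y - U x)) - 1)) ≤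
      ∫ y, G (y + (-x + s ^ 4 • g)) := by
    refine integral_mono hFint (g1.comp_add_right _) fun y => ?_
    have e1 : y + (-x + s ^ 4 • g) = y - x + s ^ 4 • g := by abel
    have e2 : y - x = (y - x + s ^ 4 • g) - s ^ 4 • g := by abel
    simp only [e1, hG]
    rw [← pm_euler_eq hβ hh]
    refine mul_le_mul_of_nonneg_left ?_ (pm_euler_nonneg hβ hh U x y)
    refine (hpt y).trans ?_
    have := hsb (y - x + s ^ 4 • g)
    rwa [← e2] at this
  rw [integral_add_right_eq_self G, g2, ← hlap] at hmono
  refine hmono.trans ?_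
  have hp0 := norm_nonneg D
  have b1 : (s ^ 4) ^ 2 * A g g ≤ L ^ 3 * s ^ 5 := by
    have := (le_abs_self _).trans (A.le_opNorm₂ g g)
    calc (s ^ 4) ^ 2 * A g g ≤ (s ^ 4) ^ 2 * (L / s * (L / s) * (L / s)) := by
          gcongr
          refine this.trans ?_
          rw [hgn]
          gcongr
      _ = _ := by field_simp
  have b2 : (s ^ 4) ^ 2 * ‖D‖ ^ 4 ≤ s ^ 4 * (L ^ 2 * ‖D‖ ^ 2) := by
    calc (s ^ 4) ^ 2 * ‖D‖ ^ 4 = (s ^ 4) ^ 2 * (‖D‖ ^ 2 * ‖D‖ ^ 2) := by ring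
      _ ≤ (s ^ 4) ^ 2 * ((L / s) ^ 2 * ‖D‖ ^ 2) := by gcongr
      _ = s ^ 4 * (s ^ 2 * (L ^ 2 * ‖D‖ ^ 2)) := by field_simp
      _ ≤ s ^ 4 * (1 * (L ^ 2 * ‖D‖ ^ 2)) := by
          gcongr
          exact pow_le_one₀ hs0.le hs1
      _ = _ := by ring
  have b3 : 1 / 2 * θ * (s ^ 4) ^ 2 * A g g ≤ L ^ 3 * s ^ 5 := by
    have h0 : 0 ≤ L ^ 3 * s ^ 5 := by positivity
    have := mul_le_mul_of_nonneg_left b1 (by positivity : 0 ≤ 1 / 2 * θ)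
    nlinarith
  have b4 := mul_le_mul_of_nonneg_left b2 (by positivity : 0 ≤ 2 * θ ^ 2)
  have e5 : 1 / (2 * (β / (4 * s ^ 4))) = 2 * s ^ 4 / β := by field_simp; norm_num
  rw [e5, hk0, hgn]
  have e6 : 1 / 2 * θ * (2 * s ^ 4 / β * lapl U x) = θ * s ^ 4 * (lapl U x / β) := by
    field_simp
  have e7 : 2 * θ ^ 2 * ‖D‖ ^ 2 * (2 * s ^ 4 / β * n) =
      θ * s ^ 4 * (4 * θ * n / β * ‖D‖ ^ 2) := by field_simp; ring
  rw [e6, e7]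
  linarith

theorem pm_one_step_real {n : ℕ} {β : ℝ} (hβ : 0 < β) {U : Euc n → ℝ} (hU : Assumption1 n β U) :
    ∃ θ ∈ Set.Ioo (0:ℝ) (β - hU.c), ∃ γ > (0:ℝ), ∃ K > (0:ℝ), ∃ s0 > (0:ℝ),
      ∀ s : ℝ, 0 < s → s ≤ s0 → ∀ x, U x < 1 / s →
        exp (θ * U x) * (1 + ∫ y, eulerDensity n β (s ^ 4) U x y *
          (acceptBar n β (s ^ 4) 1 U x y * (exp (θ * (U y - U x)) - 1)))
        ≤ (1 - γ * s ^ 4) * exp (θ * U x) + s ^ 4 * K := by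
  obtain ⟨C, hC0, hC⟩ := pm_deriv_facts hU
  have hc := hU.c_lt
  have hd := hU.d_pos
  have hcp := hU.c_pos
  obtain ⟨L, hL⟩ : ∃ L, L = C * exp C := ⟨_, rfl⟩
  have hL0 : 0 < L := by rw [hL]; positivity
  set c := hU.c with hcdef
  set d := hU.d with hddef
  have hδ : 0 < 1 - c / β := by
    rw [sub_pos, div_lt_one hβ]; exact hc
  set W := 4 * (n : ℝ) / β + 2 * L ^ 2 with hW
  have hW0 : 0 < W := by positivity
  obtain ⟨θ, hθ, hθ1, hθL, hθc, hθW⟩ : ∃ θ : ℝ, 0 < θ ∧ θ ≤ 1 ∧ θ * L ≤ 1 / 2 ∧ θ < β - c ∧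
      θ * W ≤ 1 - c / β := by
    refine ⟨min (min 1 (1 / (2 * L))) (min ((β - c) / 2) ((1 - c / β) / W)), ?_, ?_, ?_, ?_, ?_⟩
    · have : 0 < β - c := by linarith
      exact lt_min (lt_min one_pos (by positivity)) (lt_min (by positivity) (by positivity))
    · exact (min_le_left _ _).trans (min_le_left _ _)
    · calc _ ≤ 1 / (2 * L) * L := by
            gcongr
            exact (min_le_left _ _).trans (min_le_right _ _)
        _ = _ := by field_simp
    · refine ((min_le_right _ _).trans (min_le_left _ _)).trans_lt ?_
      linarith
    · calc _ ≤ (1 - c / β) / W * W := by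
            gcongr
            exact (min_le_right _ _).trans (min_le_right _ _)
        _ = _ := by field_simp
  set C' := (200 + β * (48 * L + L ^ 2)) * exp (2 * L + 8 / β) * 2 ^ ((n : ℝ) / 2) + L ^ 3 with hC'
  have hC'0 : 0 < C' := by positivity
  set γ := θ * d / (2 * β) with hγ
  have hγ0 : 0 < γ := by positivity
  set E := |hU.EB| with hE
  set M := θ * (n * (C * E)) / β + C' with hM
  have hM0 : 0 < M := by
    have : 0 ≤ E := abs_nonneg _
    positivity
  refine ⟨θ, ⟨hθ, hθc⟩, γ, hγ0, (M + γ) * exp (θ * E), by positivity,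
    min 1 (γ / C'), by positivity, ?_⟩
  intro s hs0 hss x hx
  have hs1 : s ≤ 1 := hss.trans (min_le_left _ _)
  have hsC : C' * s ≤ γ := by
    have := hss.trans (min_le_right _ _)
    rw [le_div_iff₀ hC'0] at this
    linarith
  have key := pm_F_bound hβ hU.smooth hU.one_le hC0 hC hL hθ hθ1 hθL hs0 hs1 x hx
  set I := ∫ y, eulerDensity n β (s ^ 4) U x y *
          (acceptBar n β (s ^ 4) 1 U x y * (exp (θ * (U y - U x)) - 1)) with hI
  set p := ‖gradient U x‖ ^ 2 with hp
  have hp0 : 0 ≤ p := by positivity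
  have hh : 0 < s ^ 4 := by positivity
  have eW : 4 * θ * n / β + 2 * θ * L ^ 2 = θ * W := by rw [hW]; ring
  rw [eW, ← hC'] at key
  have hpW : θ * W * p ≤ (1 - c / β) * p := by gcongr
  have e5 : C' * s ^ 5 = s ^ 4 * (C' * s) := by ring
  rw [e5] at key
  have hΦ := exp_pos (θ * U x)
  rcases lt_or_ge hU.EB (U x) with hEB | hEB
  · have hdr := hU.driftB x hEB
    rw [← hcdef, ← hddef, ← hp] at hdr
    have hdr2 : lapl U x / β ≤ c / β * p - d / β := by
      have : lapl U x ≤ c * p - d := by nlinarith [hU.one_le x]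
      calc lapl U x / β ≤ (c * p - d) / β := by gcongr
        _ = _ := by ring
    have k1 : I ≤ -(γ * s ^ 4) := by
      have : θ * s ^ 4 * (-p + lapl U x / β + θ * W * p) ≤ θ * s ^ 4 * (-(d / β)) := by
        gcongr
        linarith
      have h2 : s ^ 4 * (C' * s) ≤ s ^ 4 * γ := by gcongr
      have h3 : θ * s ^ 4 * (-(d / β)) = - (2 * γ * s ^ 4) := by
        rw [hγ]; field_simp
      linarith
    have k2 : exp (θ * U x) * (1 + I) ≤ exp (θ * U x) * (1 - γ * s ^ 4) := by
      gcongr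
      linarith
    have k3 : 0 ≤ s ^ 4 * ((M + γ) * exp (θ * E)) := by positivity
    linarith
  · have hUE : U x ≤ E := hEB.trans (le_abs_self _)
    have hlap : lapl U x ≤ n * (C * E) := by
      unfold lapl
      calc _ ≤ ∑ i : Fin n, C * E := by
            refine Finset.sum_le_sum fun i _ => ?_
            rw [pm_D2_eq]
            refine (le_abs_self _).trans ?_
            refine ((fderiv ℝ (fderiv ℝ U) x).le_opNorm₂ _ _).trans ?_
            simp only [PiLp.norm_single, norm_one, mul_one]
            refine (hC x).2.1.trans ?_
            gcongr
        _ = _ := by simp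
    have k1 : I ≤ s ^ 4 * M := by
      have h1 : lapl U x / β ≤ n * (C * E) / β := by gcongr
      have h4 : c / β * p ≥ 0 := by positivity
      have : θ * s ^ 4 * (-p + lapl U x / β + θ * W * p) ≤ θ * s ^ 4 * (n * (C * E) / β) := by
        gcongr
        linarith
      have h2 : s ^ 4 * (C' * s) ≤ s ^ 4 * (C' * 1) := by gcongr
      have h3 : s ^ 4 * M = θ * s ^ 4 * (n * (C * E) / β) + s ^ 4 * (C' * 1) := by
        rw [hM]; ring
      linarith
    have k2 : exp (θ * U x) * (1 + I) ≤ exp (θ * U x) * (1 + s ^ 4 * M) := by gcongr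
    have k3 : s ^ 4 * ((M + γ) * exp (θ * U x)) ≤ s ^ 4 * ((M + γ) * exp (θ * E)) := by gcongr
    linarith

open scoped Classical in
/-- Lyapunov function, infinite outside the level set. -/
def pmV {n : ℕ} (h E θ : ℝ) (U : Euc n → ℝ) (y : Euc n) : ℝ≥0∞ :=
  if y ∈ Rset n h E U then ENNReal.ofReal (exp (θ * U y)) else ⊤

theorem pmV_meas {n : ℕ} {h E θ : ℝ} {U : Euc n → ℝ} (hs : ContDiff ℝ 4 U) :
    Measurable (pmV h E θ U) := by
  have hU := hs.continuous.measurable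
  unfold pmV
  exact Measurable.ite (pm_R_meas hs) (by fun_prop) measurable_const

theorem pm_aq_int {n : ℕ} {β h E : ℝ} (hβ : 0 < β) (hh : 0 < h) {U : Euc n → ℝ}
    (hs : ContDiff ℝ 4 U) (x : Euc n) :
    Integrable (fun y => acceptBar n β h E U x y * eulerDensity n β h U x y) := by
  have h0 := pm_acceptBar_meas (β := β) (h := h) (E := E) hs x
  refine (pm_euler_int hβ hh U x).1.bdd_mul (c := 1) h0.aestronglyMeasurable ?_
  refine Eventually.of_forall fun y => ?_
  have hb := pm_acceptBar_mem (E := E) hβ hh U x y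
  rw [norm_eq_abs, abs_of_nonneg hb.1]
  exact hb.2

theorem pm_aq_le {n : ℕ} {β h E : ℝ} (hβ : 0 < β) (hh : 0 < h) {U : Euc n → ℝ}
    (hs : ContDiff ℝ 4 U) (x : Euc n) :
    ∫ y, acceptBar n β h E U x y * eulerDensity n β h U x y ≤ 1 := by
  rw [← (pm_euler_int hβ hh U x).2]
  refine integral_mono (pm_aq_int hβ hh hs x) (pm_euler_int hβ hh U x).1 fun y => ?_
  have hb := pm_acceptBar_mem (E := E) hβ hh U x y
  exact mul_le_of_le_one_left (pm_euler_nonneg hβ hh U x y) hb.2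

theorem pm_aq_lint {n : ℕ} {β h E : ℝ} (hβ : 0 < β) (hh : 0 < h) {U : Euc n → ℝ}
    (hs : ContDiff ℝ 4 U) (x : Euc n) :
    ∫⁻ y, ENNReal.ofReal (acceptBar n β h E U x y * eulerDensity n β h U x y) =
      ENNReal.ofReal (∫ y, acceptBar n β h E U x y * eulerDensity n β h U x y) := by
  rw [ofReal_integral_eq_lintegral_ofReal (pm_aq_int hβ hh hs x)]
  exact Eventually.of_forall fun y => mul_nonneg (pm_acceptBar_mem (E := E) hβ hh U x y).1
    (pm_euler_nonneg hβ hh U x y)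

theorem pm_mass {n : ℕ} {β h E : ℝ} (hβ : 0 < β) (hh : 0 < h) {U : Euc n → ℝ}
    (hs : ContDiff ℝ 4 U) (x : Euc n) : patchedKernel n β h E U x Set.univ ≤ 1 := by
  unfold patchedKernel
  rw [Measure.add_apply, Measure.smul_apply, withDensity_apply _ MeasurableSet.univ,
    Measure.restrict_univ, measure_univ, smul_eq_mul, mul_one, pm_aq_lint hβ hh hs]
  rw [add_tsub_cancel_of_le]
  rw [ENNReal.ofReal_le_one]
  exact pm_aq_le hβ hh hs x

theorem pm_kernel_lint {n : ℕ} {β h E : ℝ} (hβ : 0 < β) (hh : 0 < h) {U : Euc n → ℝ}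
    (hs : ContDiff ℝ 4 U) (h1 : ∀ x, 1 ≤ U x) {θ : ℝ} (hθ : 0 < θ) (x : Euc n)
    (hx : x ∈ Rset n h E U) :
    ∫⁻ y, pmV h E θ U y ∂(patchedKernel n β h E U x) =
      ENNReal.ofReal (exp (θ * U x) * (1 + ∫ y, eulerDensity n β h U x y *
          (acceptBar n β h E U x y * (exp (θ * (U y - U x)) - 1)))) := by
  have hF := pm_F_int (E := E) hβ hh hs h1 hθ x
  have hq := pm_aq_int (E := E) hβ hh hs x
  have hle := pm_aq_le (E := E) hβ hh hs x
  have hm1 := pm_acceptBar_meas (β := β) (h := h) (E := E) hs x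
  have hm2 := pm_euler_meas (β := β) (h := h) (U := U) x
  have hnn : ∀ y, 0 ≤ acceptBar n β h E U x y * eulerDensity n β h U x y := fun y =>
    mul_nonneg (pm_acceptBar_mem (E := E) hβ hh U x y).1 (pm_euler_nonneg hβ hh U x y)
  have hVx : pmV h E θ U x = ENNReal.ofReal (exp (θ * U x)) := if_pos hx
  have hm3 : Measurable (fun y => ENNReal.ofReal
      (acceptBar n β h E U x y * eulerDensity n β h U x y)) := (hm1.mul hm2).ennreal_ofReal
  unfold patchedKernel
  rw [lintegral_add_measure, lintegral_smul_measure, lintegral_dirac' _ (pmV_meas hs),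
    lintegral_withDensity_eq_lintegral_mul _ hm3 (pmV_meas hs),
    pm_aq_lint hβ hh hs, hVx]
  have e : ∀ y, exp (θ * U x) * (eulerDensity n β h U x y *
        (acceptBar n β h E U x y * (exp (θ * (U y - U x)) - 1))
        + acceptBar n β h E U x y * eulerDensity n β h U x y)
      = acceptBar n β h E U x y * eulerDensity n β h U x y * exp (θ * U y) := by
    intro y
    have : exp (θ * U y) = exp (θ * U x) * exp (θ * (U y - U x)) := by
      rw [← exp_add]; ring_nf
    rw [this]; ring
  have hint : Integrable (fun y => acceptBar n β h E U x y * eulerDensity n β h U x y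
      * exp (θ * U y)) := by
    simp_rw [← e]
    exact (hF.add hq).const_mul _
  have e2 : ∫⁻ y, ((fun y => ENNReal.ofReal (acceptBar n β h E U x y * eulerDensity n β h U x y))
      * pmV h E θ U) y = ENNReal.ofReal (∫ y, acceptBar n β h E U x y * eulerDensity n β h U x y
      * exp (θ * U y)) := by
    rw [ofReal_integral_eq_lintegral_ofReal hint
      (Eventually.of_forall fun y => mul_nonneg (hnn y) (exp_pos _).le)]
    refine lintegral_congr fun y => ?_
    rw [Pi.mul_apply]
    by_cases hy : y ∈ Rset n h E U
    · rw [pmV, if_pos hy, ENNReal.ofReal_mul (hnn y)]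
    · have : acceptBar n β h E U x y = 0 := by
        unfold acceptBar
        rw [if_neg (fun h => hy h.2)]
      simp [this]
  rw [e2, smul_eq_mul, ← ENNReal.ofReal_one, ← ENNReal.ofReal_sub _ (integral_nonneg hnn),
    ← ENNReal.ofReal_mul (by linarith), ← ENNReal.ofReal_add
      (integral_nonneg fun y => mul_nonneg (hnn y) (exp_pos _).le)
      (mul_nonneg (by linarith) (exp_pos _).le)]
  congr 1
  simp_rw [← e]
  rw [integral_const_mul, integral_add hF hq]
  ring

theorem pm_iter {α : Type*} [MeasurableSpace α] (κ : α → Measure α) (V : α → ℝ≥0∞)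
    (hVm : Measurable V) (a b : ℝ≥0∞) (ha : a ≤ 1) (hm : ∀ x, κ x Set.univ ≤ 1)
    (hV : ∀ x, ∫⁻ y, V y ∂(κ x) ≤ a * V x + b) (x : α) (k : ℕ) :
    ∫⁻ y, V y ∂(iterKernel κ k x) ≤ a ^ k * V x + k * b ∧ iterKernel κ k x Set.univ ≤ 1 := by
  induction k with
  | zero =>
    simp [iterKernel, lintegral_dirac' _ hVm]
  | succ k ih =>
    obtain ⟨i1, i2⟩ := ih
    constructor
    · rw [iterKernel]
      calc ∫⁻ y, V y ∂((iterKernel κ k x).bind κ)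
          ≤ ∫⁻ z, ∫⁻ y, V y ∂(κ z) ∂(iterKernel κ k x) := Measure.lintegral_bind_le _ _ _
        _ ≤ ∫⁻ z, (a * V z + b) ∂(iterKernel κ k x) := lintegral_mono hV
        _ = a * ∫⁻ z, V z ∂(iterKernel κ k x) + b * iterKernel κ k x Set.univ := by
          rw [lintegral_add_right _ measurable_const, lintegral_const_mul _ hVm, lintegral_const]
        _ ≤ a * (a ^ k * V x + k * b) + b * 1 := by gcongr
        _ = a ^ (k + 1) * V x + (a * (k * b) + b) := by ring
        _ ≤ a ^ (k + 1) * V x + (1 * (k * b) + b) := by gcongr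
        _ = _ := by push_cast; ring
    · rw [iterKernel]
      calc ((iterKernel κ k x).bind κ) Set.univ = ∫⁻ y, 1 ∂((iterKernel κ k x).bind κ) := by simp
        _ ≤ ∫⁻ z, ∫⁻ y, 1 ∂(κ z) ∂(iterKernel κ k x) := Measure.lintegral_bind_le _ _ _
        _ ≤ ∫⁻ z, 1 ∂(iterKernel κ k x) := lintegral_mono fun z => by simpa using hm z
        _ ≤ 1 := by simpa using i2

theorem pm_main {n : ℕ} {β : ℝ} (hβ : 0 < β) {U : Euc n → ℝ} (hU : Assumption1 n β U) :
    ∃ θ ∈ Set.Ioo (0:ℝ) (β - hU.c), ∃ γ > (0:ℝ), ∃ K > (0:ℝ), ∃ Estar > (0:ℝ), ∃ hc > (0:ℝ),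
      ∀ h : ℝ, 0 < h → h < hc → ∀ x ∈ Rset n h Estar U,
        ∫ y, exp (θ * U y) ∂(iterKernel (patchedKernel n β h Estar U) (Nat.floor (1/h)) x)
          ≤ exp (-γ) * exp (θ * U x) + K := by
  obtain ⟨θ, hθ, γ, hγ, K, hK, s0, hs0, H⟩ := pm_one_step_real hβ hU
  refine ⟨θ, hθ, γ / 2, by positivity, K, hK, 1, one_pos,
    min (s0 ^ 4) (min (1 / 2) (1 / (2 * γ))), by positivity, ?_⟩
  intro h hh hhc x hx
  have hhs : h ≤ s0 ^ 4 := hhc.le.trans (min_le_left _ _)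
  have hh2 : h ≤ 1 / 2 := hhc.le.trans ((min_le_right _ _).trans (min_le_left _ _))
  have hhγ : γ * h ≤ 1 / 2 := by
    have : h ≤ 1 / (2 * γ) := hhc.le.trans ((min_le_right _ _).trans (min_le_right _ _))
    calc γ * h ≤ γ * (1 / (2 * γ)) := by gcongr
      _ = _ := by field_simp
  obtain ⟨s, hs, rfl⟩ : ∃ s : ℝ, 0 < s ∧ h = s ^ 4 := by
    refine ⟨h ^ ((1:ℝ) / 4), by positivity, ?_⟩
    rw [← rpow_natCast, ← rpow_mul hh.le]
    norm_num
  have hss : s ≤ s0 := le_of_pow_le_pow_left₀ (by norm_num) hs0.le hhs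
  have hV : ∀ z, ∫⁻ y, pmV (s ^ 4) 1 θ U y ∂(patchedKernel n β (s ^ 4) 1 U z) ≤
      ENNReal.ofReal (1 - γ * s ^ 4) * pmV (s ^ 4) 1 θ U z + ENNReal.ofReal (s ^ 4 * K) := by
    intro z
    by_cases hz : z ∈ Rset n (s ^ 4) 1 U
    · rw [pm_kernel_lint hβ hh hU.smooth hU.one_le hθ.1 z hz, pmV, if_pos hz,
        ← ENNReal.ofReal_mul (by linarith),
        ← ENNReal.ofReal_add (mul_nonneg (by linarith) (exp_pos _).le) (by positivity)]
      exact ENNReal.ofReal_le_ofReal (H s hs hss z ((pm_mem_R hs z).1 hz))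
    · rw [pmV, if_neg hz, ENNReal.mul_top]
      · simp
      · rw [ne_eq, ENNReal.ofReal_eq_zero]; linarith
  set k := Nat.floor (1 / s ^ 4) with hk
  have it := (pm_iter (patchedKernel n β (s ^ 4) 1 U) (pmV (s ^ 4) 1 θ U) (pmV_meas hU.smooth)
    (ENNReal.ofReal (1 - γ * s ^ 4)) (ENNReal.ofReal (s ^ 4 * K))
    (by rw [ENNReal.ofReal_le_one]; linarith [mul_pos hγ hh])
    (pm_mass hβ hh hU.smooth) hV x k).1
  have hkle : (k : ℝ) * s ^ 4 ≤ 1 := by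
    have := Nat.floor_le (by positivity : 0 ≤ 1 / s ^ 4)
    rwa [← hk, le_div_iff₀ hh] at this
  have hkge : 1 / 2 ≤ (k : ℝ) * s ^ 4 := by
    have := Nat.lt_floor_add_one (1 / s ^ 4)
    rw [← hk, div_lt_iff₀ hh] at this
    linarith
  have hpow : (1 - γ * s ^ 4) ^ k ≤ exp (-(γ / 2)) := by
    calc (1 - γ * s ^ 4) ^ k ≤ (exp (-(γ * s ^ 4))) ^ k := by
          gcongr
          · linarith
          · linarith [add_one_le_exp (-(γ * s ^ 4))]
      _ = exp (-(γ * (k * s ^ 4))) := by rw [← exp_nat_mul]; ring_nf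
      _ ≤ exp (-(γ * (1 / 2))) := by gcongr
      _ = _ := by ring_nf
  rw [pmV, if_pos hx] at it
  have it2 : ∫⁻ y, ENNReal.ofReal (exp (θ * U y)) ∂(iterKernel (patchedKernel n β (s ^ 4) 1 U) k x)
      ≤ ENNReal.ofReal (exp (-(γ / 2)) * exp (θ * U x) + K) := by
    calc _ ≤ ∫⁻ y, pmV (s ^ 4) 1 θ U y ∂(iterKernel (patchedKernel n β (s ^ 4) 1 U) k x) := by
          refine lintegral_mono fun y => ?_
          unfold pmV
          split_ifs <;> simp
      _ ≤ _ := it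
      _ = ENNReal.ofReal ((1 - γ * s ^ 4) ^ k * exp (θ * U x) + k * (s ^ 4 * K)) := by
          rw [ENNReal.ofReal_add (mul_nonneg (pow_nonneg (by linarith) _) (exp_pos _).le)
            (by positivity), ENNReal.ofReal_mul (p := (1 - γ * s ^ 4) ^ k) (pow_nonneg (by linarith) _),
            ENNReal.ofReal_mul (Nat.cast_nonneg k), ENNReal.ofReal_pow (p := 1 - γ * s ^ 4) (by linarith),
            ENNReal.ofReal_natCast]
      _ ≤ _ := by
          apply ENNReal.ofReal_le_ofReal
          have : k * (s ^ 4 * K) ≤ K := by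
            calc k * (s ^ 4 * K) = (k * s ^ 4) * K := by ring
              _ ≤ 1 * K := by gcongr
              _ = K := one_mul K
          gcongr
  rw [integral_eq_lintegral_of_nonneg_ae (Eventually.of_forall fun y => (exp_pos _).le)
    (by
      have := hU.smooth.continuous
      exact (by fun_prop : Continuous fun y => exp (θ * U y)).aestronglyMeasurable)]
  exact ENNReal.toReal_le_of_le_ofReal (by positivity) it2

end PatchedMala

/-- Drift condition for patched MALA over unit physical time. -/
theorem patched_mala_unit_time_drift (n : ℕ) (β : ℝ) (hβ : 0 < β)
    (U : Euc n → ℝ) (hU : Assumption1 n β U) :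
    ∃ θ ∈ Set.Ioo (0:ℝ) (β - hU.c), ∃ γ > (0:ℝ), ∃ K > (0:ℝ), ∃ Estar > (0:ℝ), ∃ hc > (0:ℝ),
      ∀ h : ℝ, 0 < h → h < hc → ∀ x ∈ Rset n h Estar U,
        ∫ y, exp (θ * U y) ∂(iterKernel (patchedKernel n β h Estar U) (Nat.floor (1/h)) x)
          ≤ exp (-γ) * exp (θ * U x) + K := by
  exact pm_main hβ hU

end
end

section
/- (MALA and patched MALA agree up to exponentially small terms.) Let U satisfy Assumption 1. Provided E_⋆ > 0 is sufficiently small, there exist θ ∈ (0, β−c) and positive constants C₁, C₂, h_c such that for every x ∈ R_h, every stepsize h < h_c and every T > 0, one has sup_{t ∈ [0,T]} ‖P_h^{⌊t/h⌋}(x,·) − P̄_h^{⌊t/h⌋}(x,·)‖_TV ≤ C₁·Φ_θ(x)·exp(−C₂·h^{−1/4})·(1 + T). -/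
open MeasureTheory Real Filter
open scoped ENNReal

noncomputable section

section Abstract

variable {X : Type*} [MeasurableSpace X]

/-- Generic Metropolis kernel with accepted density `a`. -/
def MK (μ : Measure X) (a : X → X → ℝ≥0∞) (x : X) : Measure X :=
  μ.withDensity (a x) + (1 - ∫⁻ y, a x y ∂μ) • Measure.dirac x

lemma MK_measurable (μ : Measure X) [SFinite μ] {a : X → X → ℝ≥0∞}
    (ha : Measurable (Function.uncurry a)) : Measurable (MK μ a) := by
  refine Measure.measurable_of_measurable_coe _ fun A hA => ?_
  have h1 : ∀ x, MK μ a x A = (∫⁻ y, A.indicator (a x) y ∂μ)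
      + (1 - ∫⁻ y, a x y ∂μ) * A.indicator 1 x := by
    intro x
    simp [MK, withDensity_apply _ hA, Measure.dirac_apply' _ hA, lintegral_indicator hA]
  simp_rw [h1]
  have h2 : Measurable fun x => ∫⁻ y, a x y ∂μ := ha.lintegral_prod_right'
  have h3 : Measurable fun x => ∫⁻ y, A.indicator (a x) y ∂μ := by
    have : Measurable (Function.uncurry fun x y => A.indicator (a x) y) := by
      have := ha.indicator (measurable_snd hA)
      convert this using 1
      ext ⟨x, y⟩
      rfl
    exact this.lintegral_prod_right'
  exact h3.add ((measurable_const.sub h2).mul (measurable_one.indicator hA))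

lemma MK_lintegral (μ : Measure X) [SFinite μ] {a : X → X → ℝ≥0∞}
    (ha : Measurable (Function.uncurry a)) (x : X) {f : X → ℝ≥0∞} (hf : Measurable f) :
    ∫⁻ y, f y ∂(MK μ a x) = (∫⁻ y, a x y * f y ∂μ) + (1 - ∫⁻ y, a x y ∂μ) * f x := by
  have hax : Measurable (a x) := ha.of_uncurry_left
  simp [MK, lintegral_add_measure, lintegral_withDensity_eq_lintegral_mul _ hax hf,
    lintegral_dirac' _ hf]

lemma MK_prob (μ : Measure X) [SFinite μ] {a : X → X → ℝ≥0∞}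
    (h1 : ∀ x, ∫⁻ y, a x y ∂μ ≤ 1) (x : X) :
    IsProbabilityMeasure (MK μ a x) := by
  constructor
  simp [MK, add_tsub_cancel_of_le (h1 x)]

lemma iter_prob (μ : Measure X) [SFinite μ] {a : X → X → ℝ≥0∞}
    (ha : Measurable (Function.uncurry a)) (h1 : ∀ x, ∫⁻ y, a x y ∂μ ≤ 1) (x : X) (k : ℕ) :
    iterKernel (MK μ a) k x Set.univ = 1 := by
  induction k with
  | zero => simp [iterKernel]
  | succ k ih =>
    rw [iterKernel, Measure.bind_apply MeasurableSet.univ (MK_measurable μ ha).aemeasurable]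
    have : ∀ z, MK μ a z Set.univ = 1 := fun z => (MK_prob μ h1 z).measure_univ
    simp [this, ih]

lemma MK_lintegral_meas (μ : Measure X) [SFinite μ] {a : X → X → ℝ≥0∞}
    (ha : Measurable (Function.uncurry a)) {f : X → ℝ≥0∞} (hf : Measurable f) :
    Measurable fun z => ∫⁻ y, f y ∂(MK μ a z) :=
  (Measure.measurable_lintegral hf).comp (MK_measurable μ ha)

lemma iter_succ_lintegral (μ : Measure X) [SFinite μ] {a : X → X → ℝ≥0∞}
    (ha : Measurable (Function.uncurry a)) (x : X) (k : ℕ) {f : X → ℝ≥0∞} (hf : Measurable f) :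
    ∫⁻ y, f y ∂(iterKernel (MK μ a) (k+1) x)
      = ∫⁻ z, ∫⁻ y, f y ∂(MK μ a z) ∂(iterKernel (MK μ a) k x) := by
  rw [iterKernel, Measure.lintegral_bind (MK_measurable μ ha).aemeasurable hf.aemeasurable]

lemma MK_invariant (μ : Measure X) [SFinite μ] {a : X → X → ℝ≥0∞}
    (ha : Measurable (Function.uncurry a)) (h1 : ∀ x, ∫⁻ y, a x y ∂μ ≤ 1)
    {w : X → ℝ≥0∞} (hw : Measurable w)
    (hdb : ∀ x y, w x * a x y = w y * a y x) {f : X → ℝ≥0∞} (hf : Measurable f) :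
    ∫⁻ z, w z * ∫⁻ y, f y ∂(MK μ a z) ∂μ = ∫⁻ z, w z * f z ∂μ := by
  have hI : Measurable fun x => ∫⁻ y, a x y ∂μ := ha.lintegral_prod_right'
  have hax : ∀ x, Measurable (a x) := fun x => ha.of_uncurry_left
  have hm : Measurable (Function.uncurry fun z y => w z * (a z y * f y)) :=
    (hw.comp measurable_fst).mul (ha.mul (hf.comp measurable_snd))
  have hm2 : Measurable fun z => w z * f z * (1 - ∫⁻ y, a z y ∂μ) :=
    (hw.mul hf).mul (measurable_const.sub hI)
  have e1 : ∫⁻ z, w z * ∫⁻ y, a z y * f y ∂μ ∂μ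
      = ∫⁻ z, w z * f z * ∫⁻ y, a z y ∂μ ∂μ := by
    calc _ = ∫⁻ z, ∫⁻ y, w z * (a z y * f y) ∂μ ∂μ := by
          refine lintegral_congr fun z => ?_
          rw [lintegral_const_mul _ ((hax z).fun_mul hf)]
      _ = ∫⁻ y, ∫⁻ z, w z * (a z y * f y) ∂μ ∂μ := lintegral_lintegral_swap hm.aemeasurable
      _ = ∫⁻ y, ∫⁻ z, w y * f y * a y z ∂μ ∂μ := by
          refine lintegral_congr fun y => lintegral_congr fun z => ?_
          rw [← mul_assoc, hdb z y]; ring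
      _ = _ := by
          refine lintegral_congr fun z => ?_
          rw [lintegral_const_mul _ (hax z)]
  calc _ = ∫⁻ z, (w z * ∫⁻ y, a z y * f y ∂μ) + w z * f z * (1 - ∫⁻ y, a z y ∂μ) ∂μ := by
        refine lintegral_congr fun z => ?_
        rw [MK_lintegral μ ha z hf]; ring
    _ = ∫⁻ z, w z * f z * (∫⁻ y, a z y ∂μ) ∂μ
          + ∫⁻ z, w z * f z * (1 - ∫⁻ y, a z y ∂μ) ∂μ := by
        rw [lintegral_add_right _ hm2, e1]
    _ = ∫⁻ z, w z * f z ∂μ := by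
        rw [← lintegral_add_right _ hm2]
        refine lintegral_congr fun z => ?_
        rw [← mul_add, add_tsub_cancel_of_le (h1 z), mul_one]

lemma iter_bound (μ : Measure X) [SFinite μ] {a : X → X → ℝ≥0∞}
    (ha : Measurable (Function.uncurry a)) (h1 : ∀ x, ∫⁻ y, a x y ∂μ ≤ 1)
    {w : X → ℝ≥0∞} (hw : Measurable w)
    (hdb : ∀ x y, w x * a x y = w y * a y x) (x : X) (M : ℝ≥0∞)
    (hM : ∀ y, a x y ≤ M * w y) (k : ℕ) :
    ∀ f : X → ℝ≥0∞, Measurable f →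
    ∫⁻ y, f y ∂(iterKernel (MK μ a) k x) ≤ f x + k * (M * ∫⁻ y, w y * f y ∂μ) := by
  induction k with
  | zero => intro f hf; simp [iterKernel, lintegral_dirac' _ hf]
  | succ k ih =>
    intro f hf
    rw [iter_succ_lintegral μ ha x k hf]
    refine (ih _ (MK_lintegral_meas μ ha hf)).trans ?_
    rw [MK_invariant μ ha h1 hw hdb hf, MK_lintegral μ ha x hf]
    have hA : ∫⁻ y, a x y * f y ∂μ ≤ M * ∫⁻ y, w y * f y ∂μ := by
      rw [← lintegral_const_mul _ (hw.fun_mul hf)]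
      refine lintegral_mono fun y => ?_
      rw [← mul_assoc]; gcongr; exact hM y
    have hB : (1 - ∫⁻ y, a x y ∂μ) * f x ≤ f x := by
      calc _ ≤ 1 * f x := by gcongr; exact tsub_le_self
        _ = _ := one_mul _
    calc _ ≤ (M * ∫⁻ y, w y * f y ∂μ) + f x + k * (M * ∫⁻ y, w y * f y ∂μ) := by gcongr
      _ = _ := by push_cast; ring

lemma one_step (μ : Measure X) [SFinite μ] {a b : X → X → ℝ≥0∞}
    (ha : Measurable (Function.uncurry a)) (hb : Measurable (Function.uncurry b))
    (h1 : ∀ x, ∫⁻ y, a x y ∂μ ≤ 1) {R : Set X} (hR : MeasurableSet R)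
    (hba : ∀ x y, b x y ≤ a x y)
    (hb1 : ∀ x ∈ R, ∀ y ∈ R, b x y = a x y)
    (z : X) {f : X → ℝ≥0∞} (hf : Measurable f) (hf1 : ∀ y, f y ≤ 1) :
    ∫⁻ y, f y ∂(MK μ a z) ≤ ∫⁻ y, f y ∂(MK μ b z)
      + ((∫⁻ y, Rᶜ.indicator (a z) y ∂μ) + Rᶜ.indicator 1 z) := by
  by_cases hz : z ∈ R
  · rw [MK_lintegral μ ha z hf, MK_lintegral μ hb z hf]
    have hbz : Measurable (b z) := hb.of_uncurry_left
    have hA : ∫⁻ y, a z y * f y ∂μ ≤ ∫⁻ y, b z y * f y ∂μ + ∫⁻ y, Rᶜ.indicator (a z) y ∂μ := by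
      rw [← lintegral_add_left (hbz.fun_mul hf)]
      refine lintegral_mono fun y => ?_
      by_cases hy : y ∈ R
      · simp [hy, hb1 z hz y hy]
      · simp only [Set.mem_compl_iff, hy, not_false_eq_true, Set.indicator_of_mem]
        exact le_add_left (mul_le_of_le_one_right' (hf1 y))
    have hB : 1 - ∫⁻ y, a z y ∂μ ≤ 1 - ∫⁻ y, b z y ∂μ :=
      tsub_le_tsub_left (lintegral_mono fun y => hba z y) _
    calc _ ≤ (∫⁻ y, b z y * f y ∂μ + ∫⁻ y, Rᶜ.indicator (a z) y ∂μ)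
          + (1 - ∫⁻ y, b z y ∂μ) * f z := by gcongr
      _ = ∫⁻ y, b z y * f y ∂μ + (1 - ∫⁻ y, b z y ∂μ) * f z
          + ∫⁻ y, Rᶜ.indicator (a z) y ∂μ := by ring
      _ ≤ _ := by gcongr; exact le_self_add
  · have : ∫⁻ y, f y ∂(MK μ a z) ≤ 1 := by
      have := MK_prob μ h1 z
      calc _ ≤ ∫⁻ y, 1 ∂(MK μ a z) := lintegral_mono hf1
        _ = 1 := by simp
    refine this.trans ?_
    simp only [Set.mem_compl_iff, hz, not_false_eq_true, Set.indicator_of_mem, Pi.one_apply]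
    exact le_add_left (le_add_left le_rfl)

lemma compare (μ : Measure X) [SFinite μ] {a b : X → X → ℝ≥0∞}
    (ha : Measurable (Function.uncurry a)) (hb : Measurable (Function.uncurry b))
    (h1 : ∀ x, ∫⁻ y, a x y ∂μ ≤ 1) {R : Set X} (hR : MeasurableSet R)
    (hba : ∀ x y, b x y ≤ a x y)
    (hb1 : ∀ x ∈ R, ∀ y ∈ R, b x y = a x y)
    {w : X → ℝ≥0∞} (hw : Measurable w)
    (hdba : ∀ x y, w x * a x y = w y * a y x)
    (hdbb : ∀ x y, w x * b x y = w y * b y x) (x : X) (hx : x ∈ R) (M : ℝ≥0∞)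
    (hM : ∀ y, a x y ≤ M * w y) (k : ℕ) :
    ∀ f : X → ℝ≥0∞, Measurable f → (∀ y, f y ≤ 1) →
    ∫⁻ y, f y ∂(iterKernel (MK μ a) k x) ≤ ∫⁻ y, f y ∂(iterKernel (MK μ b) k x)
      + (k : ℝ≥0∞)^2 * (M * ∫⁻ y in Rᶜ, w y ∂μ) := by
  have h1b : ∀ x, ∫⁻ y, b x y ∂μ ≤ 1 := fun x => (lintegral_mono (hba x)).trans (h1 x)
  have hax : ∀ x, Measurable (a x) := fun x => ha.of_uncurry_left
  set G : X → ℝ≥0∞ := fun z => (∫⁻ y, Rᶜ.indicator (a z) y ∂μ) + Rᶜ.indicator 1 z with hG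
  have hmi : Measurable (Function.uncurry fun x y => Rᶜ.indicator (a x) y) := by
    have := ha.indicator (measurable_snd hR.compl)
    convert this using 1
    ext ⟨x, y⟩
    rfl
  have hg0 : Measurable fun z => ∫⁻ y, Rᶜ.indicator (a z) y ∂μ := hmi.lintegral_prod_right'
  have hi1 : Measurable (Rᶜ.indicator (1 : X → ℝ≥0∞)) := measurable_one.indicator hR.compl
  have hGm : Measurable G := hg0.add hi1
  set ε := ∫⁻ y in Rᶜ, w y ∂μ with hε
  have hGx : G x ≤ M * ε := by
    simp only [hG, Set.mem_compl_iff, hx, not_true_eq_false, not_false_eq_true,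
      Set.indicator_of_notMem, add_zero]
    rw [lintegral_indicator hR.compl, hε, ← lintegral_const_mul _ hw]
    exact lintegral_mono fun y => hM y
  have hGw : ∫⁻ z, w z * G z ∂μ ≤ 2 * ε := by
    simp only [hG, mul_add]
    rw [lintegral_add_right _ (hw.fun_mul hi1), two_mul]
    refine add_le_add ?_ ?_
    · calc _ = ∫⁻ z, ∫⁻ y, w z * Rᶜ.indicator (a z) y ∂μ ∂μ := by
            refine lintegral_congr fun z => ?_
            rw [lintegral_const_mul _ ((hax z).indicator hR.compl)]
        _ = ∫⁻ y, ∫⁻ z, w z * Rᶜ.indicator (a z) y ∂μ ∂μ :=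
            lintegral_lintegral_swap ((hw.comp measurable_fst).mul hmi).aemeasurable
        _ ≤ ∫⁻ y, Rᶜ.indicator w y ∂μ := by
            refine lintegral_mono fun y => ?_
            by_cases hy : y ∈ R
            · simp [hy]
            · simp only [Set.mem_compl_iff, hy, not_false_eq_true, Set.indicator_of_mem]
              simp_rw [fun z => hdba z y]
              rw [lintegral_const_mul _ (hax y)]
              exact mul_le_of_le_one_right' (h1 y)
        _ = ε := by rw [lintegral_indicator hR.compl]
    · rw [hε, ← lintegral_indicator hR.compl]
      refine lintegral_mono fun y => ?_
      by_cases hy : y ∈ R <;> simp [hy]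
  have hMb : ∀ y, b x y ≤ M * w y := fun y => (hba x y).trans (hM y)
  induction k with
  | zero => intro f hf hf1; simp [iterKernel]
  | succ k ih =>
    intro f hf hf1
    rw [iter_succ_lintegral μ ha x k hf, iter_succ_lintegral μ hb x k hf]
    have hle : ∀ z, ∫⁻ y, f y ∂(MK μ a z) ≤ 1 := fun z => by
      have := MK_prob μ h1 z
      calc _ ≤ ∫⁻ y, 1 ∂(MK μ a z) := lintegral_mono hf1
        _ = 1 := by simp
    refine (ih _ (MK_lintegral_meas μ ha hf) hle).trans ?_
    have h2 : ∫⁻ z, ∫⁻ y, f y ∂(MK μ a z) ∂(iterKernel (MK μ b) k x)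
        ≤ ∫⁻ z, ∫⁻ y, f y ∂(MK μ b z) ∂(iterKernel (MK μ b) k x)
          + (M * ε + k * (M * (2 * ε))) := by
      calc _ ≤ ∫⁻ z, (∫⁻ y, f y ∂(MK μ b z)) + G z ∂(iterKernel (MK μ b) k x) :=
            lintegral_mono fun z => one_step μ ha hb h1 hR hba hb1 z hf hf1
        _ = ∫⁻ z, ∫⁻ y, f y ∂(MK μ b z) ∂(iterKernel (MK μ b) k x)
            + ∫⁻ z, G z ∂(iterKernel (MK μ b) k x) := lintegral_add_right _ hGm
        _ ≤ _ := by
          gcongr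
          refine (iter_bound μ hb h1b hw hdbb x M hMb k G hGm).trans ?_
          gcongr
    refine (add_le_add_left h2 _).trans (le_of_eq ?_)
    push_cast; ring

lemma tv_bound (μ : Measure X) [SFinite μ] {a b : X → X → ℝ≥0∞}
    (ha : Measurable (Function.uncurry a)) (hb : Measurable (Function.uncurry b))
    (h1 : ∀ x, ∫⁻ y, a x y ∂μ ≤ 1) {R : Set X} (hR : MeasurableSet R)
    (hba : ∀ x y, b x y ≤ a x y)
    (hb1 : ∀ x ∈ R, ∀ y ∈ R, b x y = a x y)
    {w : X → ℝ≥0∞} (hw : Measurable w)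
    (hdba : ∀ x y, w x * a x y = w y * a y x)
    (hdbb : ∀ x y, w x * b x y = w y * b y x) (x : X) (hx : x ∈ R) (M : ℝ)
    (hM0 : 0 ≤ M)
    (hM : ∀ y, a x y ≤ ENNReal.ofReal M * w y) (ε : ℝ) (hε0 : 0 ≤ ε)
    (hε : ∫⁻ y in Rᶜ, w y ∂μ ≤ ENNReal.ofReal ε) (k : ℕ) :
    tvDist (iterKernel (MK μ a) k x) (iterKernel (MK μ b) k x)
      ≤ 2 * min 1 ((k:ℝ)^2 * (M * ε)) := by
  have h1b : ∀ x, ∫⁻ y, b x y ∂μ ≤ 1 := fun x => (lintegral_mono (hba x)).trans (h1 x)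
  have ip : IsProbabilityMeasure (iterKernel (MK μ a) k x) := ⟨iter_prob μ ha h1 x k⟩
  have ipb : IsProbabilityMeasure (iterKernel (MK μ b) k x) := ⟨iter_prob μ hb h1b x k⟩
  have key : ∀ A : Set X, MeasurableSet A → (iterKernel (MK μ a) k x).real A
      ≤ (iterKernel (MK μ b) k x).real A + (k:ℝ)^2 * (M * ε) := by
    intro A hA
    have := compare μ ha hb h1 hR hba hb1 hw hdba hdbb x hx _ hM k (A.indicator 1)
      (measurable_one.indicator hA) (fun y => Set.indicator_le_self' (by simp) y)
    rw [lintegral_indicator_one hA, lintegral_indicator_one hA] at this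
    have h2 : (iterKernel (MK μ a) k x) A ≤ ENNReal.ofReal
        ((iterKernel (MK μ b) k x).real A + (k:ℝ)^2 * (M * ε)) := by
      refine this.trans ?_
      rw [ENNReal.ofReal_add (by positivity) (by positivity), ENNReal.ofReal_mul (by positivity),
        ENNReal.ofReal_mul hM0, ENNReal.ofReal_pow (by positivity), ENNReal.ofReal_natCast,
        ofReal_measureReal]
      gcongr
    exact ENNReal.toReal_le_of_le_ofReal (by positivity) h2
  unfold tvDist
  refine mul_le_mul_of_nonneg_left ?_ (by norm_num)
  have : Nonempty {A : Set X // MeasurableSet A} := ⟨⟨∅, MeasurableSet.empty⟩⟩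
  refine ciSup_le fun ⟨A, hA⟩ => ?_
  change |(iterKernel (MK μ a) k x).real A - (iterKernel (MK μ b) k x).real A| ≤ _
  have k1 := key A hA
  have k2 := key Aᶜ hA.compl
  rw [probReal_compl_eq_one_sub hA, probReal_compl_eq_one_sub hA] at k2
  have p1 : (iterKernel (MK μ a) k x).real A ≤ 1 := measureReal_le_one
  have p2 : (iterKernel (MK μ b) k x).real A ≤ 1 := measureReal_le_one
  have p3 : 0 ≤ (iterKernel (MK μ a) k x).real A := measureReal_nonneg
  have p4 : 0 ≤ (iterKernel (MK μ b) k x).real A := measureReal_nonneg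
  refine le_min ?_ ?_ <;> rw [abs_le] <;> constructor <;> linarith

end Abstract

section Concrete

variable {n : ℕ} {β h : ℝ} {U : Euc n → ℝ}

lemma euler_pos (hβ : 0 < β) (hh : 0 < h) (x y : Euc n) : 0 < eulerDensity n β h U x y := by
  unfold eulerDensity
  positivity

lemma euler_le (hβ : 0 < β) (hh : 0 < h) (x y : Euc n) :
    eulerDensity n β h U x y ≤ (4 * π * β⁻¹ * h) ^ (-(n : ℝ) / 2) := by
  unfold eulerDensity
  refine mul_le_of_le_one_right (by positivity) ?_
  rw [Real.exp_le_one_iff]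
  have : 0 ≤ ‖y - x + h • gradient U x‖ ^ 2 / (4 * β⁻¹ * h) := by positivity
  rw [neg_div]; linarith

lemma euler_lintegral (hβ : 0 < β) (hh : 0 < h) (x : Euc n) :
    ∫⁻ y, ENNReal.ofReal (eulerDensity n β h U x y) = 1 := by
  set v : Euc n := - x + h • gradient U x with hv
  set b : ℝ := (4 * β⁻¹ * h)⁻¹ with hb
  have hbp : 0 < b := by positivity
  have e : ∀ y, eulerDensity n β h U x y
      = (4 * π * β⁻¹ * h) ^ (-(n : ℝ) / 2) * exp (-b * ‖y + v‖^2) := by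
    intro y
    unfold eulerDensity
    rw [hv, hb]
    congr 2
    rw [← add_assoc, ← sub_eq_add_neg]
    field_simp
  simp_rw [e]
  have hint := GaussianFourier.integral_rexp_neg_mul_sq_norm (V := Euc n) hbp
  have hI : Integrable fun y : Euc n => exp (-b * ‖y‖^2) := by
    by_contra hc
    rw [integral_undef hc] at hint
    have : 0 < (π / b) ^ ((Module.finrank ℝ (Euc n) : ℝ) / 2) := by positivity
    linarith
  rw [lintegral_add_right_eq_self (μ := volume) (fun y : Euc n =>
    ENNReal.ofReal ((4 * π * β⁻¹ * h) ^ (-(n : ℝ) / 2) * exp (-b * ‖y‖^2))) v,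
    ← ofReal_integral_eq_lintegral_ofReal (hI.const_mul _)
      (ae_of_all _ fun y => by positivity), integral_const_mul, hint]
  have : π / b = 4 * π * β⁻¹ * h := by rw [hb]; field_simp
  rw [this, finrank_euclideanSpace, Fintype.card_fin, neg_div, ← Real.rpow_add (by positivity)]
  simp

lemma accept_mul (hβ : 0 < β) (hh : 0 < h) (x y : Euc n) :
    exp (-β * U x) * (accept n β h U x y * eulerDensity n β h U x y)
      = min (eulerDensity n β h U x y * exp (-β * U x))
          (eulerDensity n β h U y x * exp (-β * U y)) := by
  have hp := euler_pos (U := U) hβ hh x y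
  have he := exp_pos (-β * U x)
  unfold accept
  have : 0 < eulerDensity n β h U x y * exp (-β * U x) := by positivity
  rw [show ∀ a b c : ℝ, a * (b * c) = b * (c * a) from fun a b c => by ring,
    min_mul_of_nonneg _ _ this.le, div_mul_cancel₀ _ this.ne', one_mul]

lemma accept_nonneg (hβ : 0 < β) (hh : 0 < h) (x y : Euc n) : 0 ≤ accept n β h U x y := by
  unfold accept
  have := euler_pos (U := U) hβ hh x y
  have := euler_pos (U := U) hβ hh y x
  positivity

lemma euler_meas (hU : ContDiff ℝ 4 U) :
    Measurable (Function.uncurry (eulerDensity n β h U)) := by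
  have hg : Continuous (gradient U) := by
    unfold gradient
    exact (LinearIsometryEquiv.continuous _).comp (hU.continuous_fderiv (by norm_num))
  unfold eulerDensity Function.uncurry
  apply Continuous.measurable
  fun_prop

lemma accept_meas (hU : ContDiff ℝ 4 U) :
    Measurable (Function.uncurry (accept n β h U)) := by
  have h1 := euler_meas (β := β) (h := h) hU
  have h2 := h1.comp measurable_swap
  have hc : Measurable U := hU.continuous.measurable
  unfold accept
  have e1 : Measurable fun p : Euc n × Euc n => exp (-β * U p.1) := by fun_prop
  have e2 : Measurable fun p : Euc n × Euc n => exp (-β * U p.2) := by fun_prop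
  exact measurable_const.min ((h2.mul e2).div (h1.mul e1))

lemma Rset_meas (hU : ContDiff ℝ 4 U) (Estar : ℝ) : MeasurableSet (Rset n h Estar U) :=
  measurableSet_lt hU.continuous.measurable measurable_const

lemma main_tv (hβ : 0 < β) (hh : 0 < h) (hU : ContDiff ℝ 4 U) (Estar : ℝ) (D : ℝ)
    (hD0 : 0 ≤ D) (hD : ∫⁻ y in (Rset n h Estar U)ᶜ, ENNReal.ofReal (exp (-β * U y))
      ≤ ENNReal.ofReal D) (x : Euc n) (hx : x ∈ Rset n h Estar U) (k : ℕ) :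
    tvDist (iterKernel (malaKernel n β h U) k x) (iterKernel (patchedKernel n β h Estar U) k x)
      ≤ 2 * min 1 ((k:ℝ)^2 * (((4 * π * β⁻¹ * h) ^ (-(n : ℝ) / 2) * exp (β * U x)) * D)) := by
  classical
  have hR := Rset_meas (h := h) hU Estar
  set R := Rset n h Estar U
  set a : Euc n → Euc n → ℝ≥0∞ := fun x y =>
    ENNReal.ofReal (accept n β h U x y * eulerDensity n β h U x y) with ha
  set b : Euc n → Euc n → ℝ≥0∞ := fun x y =>
    ENNReal.ofReal (acceptBar n β h Estar U x y * eulerDensity n β h U x y) with hb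
  have hbif : ∀ x y, b x y = if x ∈ R ∧ y ∈ R then a x y else 0 := by
    intro x y
    simp only [hb, ha, acceptBar]
    split_ifs with h1
    · rfl
    · simp
  have ham : Measurable (Function.uncurry a) :=
    ((accept_meas hU).mul (euler_meas hU)).ennreal_ofReal
  have hbm : Measurable (Function.uncurry b) := by
    have : Function.uncurry b = (R ×ˢ R).indicator (Function.uncurry a) := by
      ext ⟨x, y⟩
      simp [Function.uncurry, hbif, Set.indicator]
    rw [this]
    exact ham.indicator (hR.prod hR)
  have hdb : ∀ x y, ENNReal.ofReal (exp (-β * U x)) * a x y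
      = ENNReal.ofReal (exp (-β * U y)) * a y x := by
    intro x y
    rw [ha, ← ENNReal.ofReal_mul (exp_pos _).le, ← ENNReal.ofReal_mul (exp_pos _).le,
      accept_mul hβ hh, accept_mul hβ hh, min_comm]
  refine tv_bound (volume : Measure (Euc n)) (a := a) (b := b) ham hbm ?_ hR ?_ ?_
    (w := fun y => ENNReal.ofReal (exp (-β * U y))) ?_ hdb ?_ x hx
    ((4 * π * β⁻¹ * h) ^ (-(n : ℝ) / 2) * exp (β * U x)) (by positivity) ?_ D hD0 hD k
  · intro x
    rw [← euler_lintegral (U := U) hβ hh x]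
    refine lintegral_mono fun y => ENNReal.ofReal_le_ofReal ?_
    exact mul_le_of_le_one_left (euler_pos hβ hh x y).le (min_le_left _ _)
  · intro x y
    rw [hbif]; split_ifs <;> simp
  · intro x hx y hy
    rw [hbif, if_pos ⟨hx, hy⟩]
  · have hc : Measurable U := hU.continuous.measurable
    fun_prop
  · intro x y
    rw [hbif, hbif]
    by_cases h1 : x ∈ R ∧ y ∈ R
    · rw [if_pos h1, if_pos h1.symm, hdb]
    · rw [if_neg h1, if_neg (fun h => h1 h.symm)]; simp
  · intro y
    rw [ha, ← ENNReal.ofReal_mul (by positivity)]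
    refine ENNReal.ofReal_le_ofReal ?_
    have h1 := accept_mul (U := U) hβ hh x y
    have h2 : exp (-β * U x) * (accept n β h U x y * eulerDensity n β h U x y)
        ≤ (4 * π * β⁻¹ * h) ^ (-(n : ℝ) / 2) * exp (-β * U y) := by
      rw [h1]
      refine (min_le_right _ _).trans ?_
      gcongr
      exact euler_le hβ hh y x
    have h3 : exp (β * U x) * exp (-β * U x) = 1 := by rw [← exp_add]; simp
    calc accept n β h U x y * eulerDensity n β h U x y
        = exp (β * U x) * (exp (-β * U x) *
            (accept n β h U x y * eulerDensity n β h U x y)) := by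
          rw [← mul_assoc, h3, one_mul]
      _ ≤ exp (β * U x) * ((4 * π * β⁻¹ * h) ^ (-(n : ℝ) / 2) * exp (-β * U y)) := by gcongr
      _ = _ := by ring

/-- Gibbs mass outside of `R_h`. -/
lemma tail_bound (hβ : 0 < β) (hU : ContDiff ℝ 4 U) (Estar E : ℝ)
    (hE : ∀ x, U x > E → 1 * (1 + ‖x‖ ^ 2) ≤ U x) (hhE : E < Estar * h ^ (-(1:ℝ) / 4)) :
    ∫⁻ y in (Rset n h Estar U)ᶜ, ENNReal.ofReal (exp (-β * U y))
      ≤ ENNReal.ofReal ((π / (β/2)) ^ ((n:ℝ)/2) *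
        exp (-(β/2) * (Estar * h ^ (-(1:ℝ) / 4)))) := by
  have hR := Rset_meas (h := h) hU Estar
  have hbp : 0 < β / 2 := by positivity
  have hint := GaussianFourier.integral_rexp_neg_mul_sq_norm (V := Euc n) hbp
  have hI : Integrable fun y : Euc n => exp (-(β/2) * ‖y‖^2) := by
    by_contra hc
    rw [integral_undef hc] at hint
    have : 0 < (π / (β/2)) ^ ((Module.finrank ℝ (Euc n) : ℝ) / 2) := by positivity
    linarith
  rw [finrank_euclideanSpace, Fintype.card_fin] at hint
  rw [← hint, ← integral_mul_const, ofReal_integral_eq_lintegral_ofReal (hI.mul_const _)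
      (ae_of_all _ fun y => by positivity)]
  refine le_trans (setLIntegral_mono' hR.compl fun y hy => ?_) (setLIntegral_le_lintegral _ _)
  refine ENNReal.ofReal_le_ofReal ?_
  rw [← exp_add, exp_le_exp]
  have hy' : Estar * h ^ (-(1:ℝ) / 4) ≤ U y := by
    simpa [Rset] using hy
  have := hE y (lt_of_lt_of_le hhE hy')
  nlinarith

end Concrete

lemma real_bound (n : ℕ) (β : ℝ) (hβ : 0 < β) (Estar : ℝ) (hEs : 0 < Estar) :
    ∃ K > (0:ℝ), ∀ h > (0:ℝ), ∀ T > (0:ℝ), ∀ u : ℝ, ∀ k : ℕ, (k:ℝ) ≤ T / h →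
      (k:ℝ)^2 * (((4 * π * β⁻¹ * h) ^ (-(n : ℝ) / 2) * exp (β * u)) *
        ((π / (β/2)) ^ ((n:ℝ)/2) * exp (-(β/2) * (Estar * h ^ (-(1:ℝ) / 4)))))
      ≤ K * T^2 * (exp (β * u) * exp (-(β/4*Estar) * h ^ (-(1:ℝ) / 4))) := by
  set m := 2 * n + 8 with hm
  set κ := β / 4 * Estar with hκ
  have hκp : 0 < κ := by positivity
  refine ⟨(4 * π * β⁻¹) ^ (-(n : ℝ) / 2) * (π / (β/2)) ^ ((n:ℝ)/2) * (m.factorial / κ^m),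
    by positivity, ?_⟩
  intro h hh T hT u k hk
  set v := h ^ (-(1:ℝ) / 4) with hv
  have hvp : 0 < v := by positivity
  have hvm : v ^ m = h ^ (-(n:ℝ)/2) * (h^2)⁻¹ := by
    rw [hv, ← Real.rpow_natCast, ← Real.rpow_mul hh.le, ← Real.rpow_natCast h 2,
      ← Real.rpow_neg hh.le, ← Real.rpow_add hh]
    congr 1
    rw [hm]; push_cast; ring
  have h1 : v ^ m * exp (-κ * v) ≤ m.factorial / κ^m := by
    have := Real.pow_div_factorial_le_exp (κ * v) (by positivity) m
    have hf : (0:ℝ) < m.factorial := by exact_mod_cast m.factorial_pos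
    rw [neg_mul, exp_neg, ← div_eq_mul_inv, div_le_div_iff₀ (exp_pos _) (by positivity)]
    rw [div_le_iff₀ hf, mul_pow] at this
    linarith
  have h2 : (k:ℝ)^2 ≤ T^2 * (h^2)⁻¹ := by
    calc (k:ℝ)^2 ≤ (T/h)^2 := by gcongr
      _ = _ := by rw [div_pow, div_eq_mul_inv]
  have h3 : exp (-(β/2) * (Estar * v)) = exp (-κ * v) * exp (-κ * v) := by
    rw [← exp_add]; congr 1; rw [hκ]; ring
  have h4 : (4 * π * β⁻¹ * h) ^ (-(n : ℝ) / 2)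
      = (4 * π * β⁻¹) ^ (-(n : ℝ) / 2) * h ^ (-(n:ℝ)/2) :=
    Real.mul_rpow (by positivity) hh.le
  rw [h3, h4]
  set A := (4 * π * β⁻¹) ^ (-(n : ℝ) / 2) with hA
  set B := (π / (β/2)) ^ ((n:ℝ)/2) with hB
  have hAp : 0 < A := by positivity
  have hBp : 0 < B := by positivity
  calc _ ≤ (T^2 * (h^2)⁻¹) * ((A * h ^ (-(n:ℝ)/2) * exp (β * u)) *
        (B * (exp (-κ * v) * exp (-κ * v)))) := by gcongr
    _ = A * B * T^2 * (exp (β*u) * exp (-κ * v)) * (v^m * exp (-κ * v)) := by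
        rw [hvm]; ring
    _ ≤ A * B * T^2 * (exp (β*u) * exp (-κ * v)) * (m.factorial / κ^m) := by gcongr
    _ = _ := by ring

/-- MALA and patched MALA agree up to exponentially small terms. -/
theorem mala_close_to_patched (n : ℕ) (β : ℝ) (hβ : 0 < β)
    (U : Euc n → ℝ) (hU : Assumption1 n β U) :
    ∃ Estar₀ > (0:ℝ), ∀ Estar : ℝ, 0 < Estar → Estar ≤ Estar₀ →
      ∃ θ ∈ Set.Ioo (0:ℝ) (β - hU.c), ∃ C₁ > (0:ℝ), ∃ C₂ > (0:ℝ), ∃ hc > (0:ℝ),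
        ∀ h : ℝ, 0 < h → h < hc → ∀ T > (0:ℝ), ∀ x ∈ Rset n h Estar U,
          ∀ t ∈ Set.Icc (0:ℝ) T,
            tvDist (iterKernel (malaKernel n β h U) (Nat.floor (t/h)) x)
                   (iterKernel (patchedKernel n β h Estar U) (Nat.floor (t/h)) x)
              ≤ C₁ * exp (θ * U x) * exp (-C₂ * h ^ (-(1:ℝ)/4)) * (1 + T) := by
  refine ⟨1, one_pos, fun Estar hEs _ => ?_⟩
  have hcβ := hU.c_lt
  set s : ℝ := min (1/2) ((β - hU.c) / (2 * β)) with hs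
  have hs0 : 0 < s := lt_min (by norm_num) (div_pos (by linarith) (by linarith))
  have hs1 : s ≤ 1/2 := min_le_left _ _
  have hs2 : s * β < β - hU.c := by
    have : s ≤ (β - hU.c) / (2 * β) := min_le_right _ _
    rw [le_div_iff₀ (by linarith)] at this
    nlinarith
  obtain ⟨K, hK, hKb⟩ := real_bound n β hβ Estar hEs
  obtain ⟨E, hE0, hE⟩ := hU.quad_growth 1 one_pos
  refine ⟨s * β, ⟨by positivity, hs2⟩, 2 * K ^ s, by positivity, s * (β/4*Estar),
    by positivity, (Estar / E) ^ 4, by positivity, ?_⟩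
  intro h hh hhc T hT x hx t ht
  have hhE : E < Estar * h ^ (-(1:ℝ) / 4) := by
    have h1 : h ^ ((1:ℝ)/4) < Estar / E := by
      have := Real.rpow_lt_rpow hh.le hhc (by norm_num : (0:ℝ) < 1/4)
      rwa [← Real.rpow_natCast, ← Real.rpow_mul (by positivity),
        show ((4:ℕ):ℝ) * (1/4) = 1 by norm_num, Real.rpow_one] at this
    have hp : 0 < h ^ ((1:ℝ)/4) := by positivity
    rw [neg_div, Real.rpow_neg hh.le, ← div_eq_mul_inv, lt_div_iff₀ hp]
    rw [lt_div_iff₀ hE0] at h1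
    linarith
  have hk : ((Nat.floor (t/h) : ℕ) : ℝ) ≤ T / h := by
    refine (Nat.floor_le (div_nonneg ht.1 hh.le)).trans ?_
    have := ht.2
    gcongr
  refine (main_tv hβ hh hU.smooth Estar _ (by positivity)
    (tail_bound hβ hU.smooth Estar E hE hhE) x hx _).trans ?_
  have hb := hKb h hh T hT (U x) _ hk
  set a := K * T^2 * (exp (β * U x) * exp (-(β/4*Estar) * h ^ (-(1:ℝ) / 4))) with ha
  have ha0 : 0 ≤ a := by positivity
  have hmin : min 1 a ≤ a ^ s := by
    rcases le_total a 1 with h1 | h1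
    · rw [min_eq_right h1]
      exact Real.self_le_rpow_of_le_one ha0 h1 (by linarith)
    · rw [min_eq_left h1]
      exact Real.one_le_rpow h1 hs0.le
  have has : a ^ s = K ^ s * (T^2) ^ s * (exp (s * β * U x) *
      exp (-(s * (β/4*Estar)) * h ^ (-(1:ℝ) / 4))) := by
    rw [ha, Real.mul_rpow (by positivity) (by positivity),
      Real.mul_rpow (by positivity) (by positivity),
      Real.mul_rpow (by positivity) (by positivity), ← Real.exp_mul, ← Real.exp_mul]
    congr 3 <;> ring
  have hTs : (T^2) ^ s ≤ 1 + T := by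
    calc (T^2) ^ s ≤ ((1+T)^2) ^ s := by gcongr; linarith
      _ ≤ ((1+T)^2) ^ ((1:ℝ)/2) := Real.rpow_le_rpow_of_exponent_le (by nlinarith) hs1
      _ = 1 + T := by rw [← Real.sqrt_eq_rpow, Real.sqrt_sq (by linarith)]
  calc _ ≤ 2 * min 1 a := by gcongr
    _ ≤ 2 * a ^ s := by gcongr
    _ = 2 * (K ^ s * (T^2) ^ s * (exp (s * β * U x) *
      exp (-(s * (β/4*Estar)) * h ^ (-(1:ℝ) / 4)))) := by rw [has]
    _ ≤ 2 * (K ^ s * (1 + T) * (exp (s * β * U x) *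
      exp (-(s * (β/4*Estar)) * h ^ (-(1:ℝ) / 4)))) := by gcongr
    _ = _ := by ring

end
end

section
/- (Truncated drift condition for forward Euler.) Let U satisfy Assumption 1. For every real ℓ > 1 there exist positive constants α_ℓ and K_ℓ such that for every stepsize h ∈ (0,1) and every x ∈ ℝ^n, the expectation over a standard Gaussian random vector ξ ∼ N(0,I) on ℝ^n satisfies E[ (U(x − h∇U(x) + √(2β⁻¹h)·ξ) ∧ α_ℓ·h^{−1/2})^ℓ ] ≤ (U(x) ∧ α_ℓ·h^{−1/2})^ℓ + h·K_ℓ. -/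
open MeasureTheory Real Filter
open scoped ENNReal

noncomputable section

lemma my_stdGaussian_eq (n : ℕ) : stdGaussian n = ProbabilityTheory.stdGaussian (Euc n) := by
  have hint0 : Integrable (fun ξ : Euc n => Real.exp (-‖ξ‖ ^ 2 / 2)) := by
    have h := (GaussianFourier.integrable_cexp_neg_mul_sq_norm_add (V := Euc n) (b := 1/2)
      (by norm_num) 0 0).norm
    refine h.congr (Eventually.of_forall fun ξ => ?_)
    simp only [Complex.norm_exp]
    congr 1
    simp [← Complex.ofReal_pow]
    ring
  have hint : Integrable (fun ξ : Euc n => (2 * π) ^ (-(n : ℝ) / 2) * Real.exp (-‖ξ‖ ^ 2 / 2)) :=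
    hint0.const_mul _
  have : IsFiniteMeasure (stdGaussian n) := by
    unfold stdGaussian
    exact isFiniteMeasure_withDensity_ofReal hint.2
  apply Measure.ext_of_charFun
  ext t
  rw [ProbabilityTheory.charFun_stdGaussian, charFun_apply, stdGaussian,
    integral_withDensity_eq_integral_toReal_smul (by fun_prop) (by simp)]
  have hpos : ∀ ξ : Euc n, 0 ≤ (2 * π) ^ (-(n : ℝ) / 2) * Real.exp (-‖ξ‖ ^ 2 / 2) :=
    fun ξ => by positivity
  have key := GaussianFourier.integral_cexp_neg_mul_sq_norm_add (V := Euc n) (b := 1/2)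
      (by norm_num) Complex.I t
  have e1 : ∀ ξ : Euc n, (ENNReal.ofReal ((2 * π) ^ (-(n : ℝ) / 2) * Real.exp (-‖ξ‖ ^ 2 / 2))).toReal
      • Complex.exp (↑(inner ℝ ξ t) * Complex.I)
      = (((2 * π) ^ (-(n : ℝ) / 2) : ℝ) : ℂ) *
        Complex.exp (-(1/2) * (‖ξ‖:ℂ) ^ 2 + Complex.I * ((inner ℝ t ξ : ℝ) : ℂ)) := by
    intro ξ
    rw [ENNReal.toReal_ofReal (hpos ξ), Complex.real_smul, Complex.exp_add, real_inner_comm]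
    push_cast
    rw [mul_assoc]
    congr 2
    · congr 1; ring
    · congr 1; ring
  simp_rw [e1]
  rw [integral_const_mul, key]
  have e2 : ((π:ℂ) / (1/2)) ^ ((Module.finrank ℝ (Euc n) : ℂ) / 2) = (((2 * π) ^ ((n : ℝ) / 2) : ℝ) : ℂ) := by
    rw [Complex.ofReal_cpow (by positivity)]
    simp
    congr 1; ring
  rw [e2, ← mul_assoc, ← Complex.ofReal_mul, ← Real.rpow_add (by positivity)]
  have : (-(n:ℝ)/2 + n/2) = 0 := by ring
  rw [this]
  simp
  congr 1; ring

instance my_prob (n : ℕ) : IsProbabilityMeasure (stdGaussian n) := by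
  rw [my_stdGaussian_eq]; infer_instance

instance my_gauss (n : ℕ) : ProbabilityTheory.IsGaussian (stdGaussian n) := by
  rw [my_stdGaussian_eq]; infer_instance

lemma my_integral_dual (n : ℕ) (L : Euc n →L[ℝ] ℝ) : ∫ ξ, L ξ ∂(stdGaussian n) = 0 := by
  rw [my_stdGaussian_eq]; exact ProbabilityTheory.integral_strongDual_stdGaussian L

lemma my_memLp_dual (n : ℕ) (L : Euc n →L[ℝ] ℝ) : MemLp (fun ξ => L ξ) 2 (stdGaussian n) :=
  L.comp_memLp' (ProbabilityTheory.IsGaussian.memLp_two_id)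

lemma my_integral_bilin (n : ℕ) (B : Euc n →L[ℝ] Euc n →L[ℝ] ℝ) :
    Integrable (fun ξ => B ξ ξ) (stdGaussian n) ∧
    ∫ ξ, B ξ ξ ∂(stdGaussian n) =
      ∑ i, B (EuclideanSpace.single i 1) (EuclideanSpace.single i 1) := by
  have hco : ∀ i j : Fin n, Integrable (fun ξ : Euc n => ξ i * ξ j) (stdGaussian n) := fun i j =>
    (my_memLp_dual n (EuclideanSpace.proj i)).integrable_mul
      (my_memLp_dual n (EuclideanSpace.proj j))
  have hm : ∀ i : Fin n, MemLp (fun ξ : Euc n => ξ i) 2 (stdGaussian n) := fun i =>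
    my_memLp_dual n (EuclideanSpace.proj i)
  have hval : ∀ i j : Fin n, ∫ ξ : Euc n, ξ i * ξ j ∂(stdGaussian n) = if i = j then 1 else 0 := by
    intro i j
    have h := ProbabilityTheory.covariance_eval_multivariateGaussian (μ := (0 : Euc n))
      (S := (1 : Matrix (Fin n) (Fin n) ℝ)) Matrix.PosSemidef.one i j
    rw [ProbabilityTheory.multivariateGaussian_zero_one, ← my_stdGaussian_eq,
      ProbabilityTheory.covariance_eq_sub (hm i) (hm j)] at h
    have h0 : ∫ ξ : Euc n, ξ i ∂(stdGaussian n) = 0 := my_integral_dual n (EuclideanSpace.proj i)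
    rw [h0] at h
    simpa [Matrix.one_apply] using h
  have hB : ∀ ξ : Euc n, B ξ ξ = ∑ i, ∑ j, (ξ i * ξ j) *
      B (EuclideanSpace.single i 1) (EuclideanSpace.single j 1) := by
    intro ξ
    have hx : ξ = ∑ i, ξ i • EuclideanSpace.single i (1:ℝ) := by
      have := (EuclideanSpace.basisFun (Fin n) ℝ).sum_repr ξ
      simpa using this.symm
    conv_lhs => rw [hx]
    simp [map_sum, Finset.mul_sum]
    rw [Finset.sum_comm]
    refine Finset.sum_congr rfl fun i _ => Finset.sum_congr rfl fun j _ => by ring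
  simp_rw [hB]
  have hI : ∀ i j : Fin n, Integrable (fun ξ : Euc n => (ξ i * ξ j) *
      B (EuclideanSpace.single i 1) (EuclideanSpace.single j 1)) (stdGaussian n) :=
    fun i j => (hco i j).mul_const _
  refine ⟨integrable_finsetSum _ fun i _ => integrable_finsetSum _ fun j _ => hI i j, ?_⟩
  rw [integral_finsetSum _ fun i _ => integrable_finsetSum _ fun j _ => hI i j]
  refine Finset.sum_congr rfl fun i _ => ?_
  rw [integral_finsetSum _ fun j _ => hI i j]
  simp_rw [integral_mul_const, hval]
  simp

lemma my_integral_bilin_shift (n : ℕ) (B : Euc n →L[ℝ] Euc n →L[ℝ] ℝ) (w : Euc n) (s : ℝ) :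
    Integrable (fun ξ => B (w + s • ξ) (w + s • ξ)) (stdGaussian n) ∧
    ∫ ξ, B (w + s • ξ) (w + s • ξ) ∂(stdGaussian n) =
      B w w + s ^ 2 * ∑ i, B (EuclideanSpace.single i 1) (EuclideanSpace.single i 1) := by
  have hB := my_integral_bilin n B
  have hL : ∀ L : Euc n →L[ℝ] ℝ, Integrable (fun ξ => L ξ) (stdGaussian n) := fun L =>
    (my_memLp_dual n L).integrable (by norm_num)
  have e : ∀ ξ, B (w + s • ξ) (w + s • ξ) = B w w + (s • (B w + B.flip w)) ξ + s ^ 2 * B ξ ξ := by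
    intro ξ; simp; ring
  simp_rw [e]
  have h1 : Integrable (fun ξ => B w w + (s • (B w + B.flip w)) ξ) (stdGaussian n) :=
    (integrable_const _).add (hL _)
  refine ⟨h1.add (hB.1.const_mul _), ?_⟩
  rw [integral_add h1 (hB.1.const_mul _), integral_add (integrable_const _) (hL _),
    my_integral_dual, integral_const_mul, hB.2]
  simp

lemma my_integral_dual_shift (n : ℕ) (L : Euc n →L[ℝ] ℝ) (w : Euc n) (s : ℝ) :
    Integrable (fun ξ => L (w + s • ξ)) (stdGaussian n) ∧
    ∫ ξ, L (w + s • ξ) ∂(stdGaussian n) = L w := by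
  have hL : ∀ L : Euc n →L[ℝ] ℝ, Integrable (fun ξ => L ξ) (stdGaussian n) := fun L =>
    (my_memLp_dual n L).integrable (by norm_num)
  have e : ∀ ξ, L (w + s • ξ) = L w + (s • L) ξ := by intro ξ; simp
  simp_rw [e]
  refine ⟨(integrable_const _).add (hL _), ?_⟩
  rw [integral_add (integrable_const _) (hL _), my_integral_dual]
  simp

lemma my_integrable_exp (n : ℕ) (c : ℝ) :
    Integrable (fun ξ => Real.exp (c * ‖ξ‖)) (stdGaussian n) := by
  obtain ⟨C, hC, hI⟩ := ProbabilityTheory.IsGaussian.exists_integrable_exp_sq (stdGaussian n)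
  refine (hI.const_mul (Real.exp (c ^ 2 / (4 * C)))).mono' (by fun_prop) (Eventually.of_forall fun ξ => ?_)
  rw [Real.norm_eq_abs, Real.abs_exp, ← Real.exp_add]
  apply Real.exp_le_exp.2
  have : c ^ 2 / (4 * C) + C * ‖ξ‖ ^ 2 - c * ‖ξ‖ = (c - 2 * C * ‖ξ‖) ^ 2 / (4 * C) := by
    field_simp; ring
  have h2 : 0 ≤ (c - 2 * C * ‖ξ‖) ^ 2 / (4 * C) := by positivity
  linarith

lemma my_integrable_poly_exp (n : ℕ) (A s c : ℝ) (hA : 0 ≤ A) (hs : 0 ≤ s) :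
    Integrable (fun ξ => (A + s * ‖ξ‖) ^ 3 * Real.exp (c * (A + s * ‖ξ‖))) (stdGaussian n) := by
  refine ((my_integrable_exp n ((c + 1) * s)).const_mul (6 * Real.exp ((c + 1) * A))).mono'
    (by fun_prop) (Eventually.of_forall fun ξ => ?_)
  have h0 : 0 ≤ A + s * ‖ξ‖ := by positivity
  rw [Real.norm_of_nonneg (by positivity)]
  have h1 : (A + s * ‖ξ‖) ^ 3 ≤ 6 * Real.exp (A + s * ‖ξ‖) := by
    have := Real.pow_div_factorial_le_exp (A + s * ‖ξ‖) h0 3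
    simp [Nat.factorial] at this
    linarith
  calc _ ≤ 6 * Real.exp (A + s * ‖ξ‖) * Real.exp (c * (A + s * ‖ξ‖)) := by gcongr
    _ = _ := by
      rw [mul_assoc, mul_assoc, ← Real.exp_add, ← Real.exp_add]; congr 2; ring

lemma my_line_deriv {n : ℕ} {U : Euc n → ℝ} (hU : ContDiff ℝ 4 U) (x δ : Euc n) (k : ℕ) (hk : k < 4)
    (t : ℝ) :
    HasDerivAt (fun t : ℝ => iteratedFDeriv ℝ k U (x + t • δ) (fun _ => δ))
      (iteratedFDeriv ℝ (k + 1) U (x + t • δ) (fun _ => δ)) t := by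
  have hd : Differentiable ℝ (iteratedFDeriv ℝ k U) :=
    hU.differentiable_iteratedFDeriv (by exact_mod_cast hk)
  have h1 := (hd (x + t • δ)).hasFDerivAt
  have hl : HasDerivAt (fun t : ℝ => x + t • δ) δ t := by
    simpa using ((hasDerivAt_id t).smul_const δ).const_add x
  have h2 := h1.comp_hasDerivAt t hl
  have h3 := ((ContinuousMultilinearMap.apply ℝ (fun _ : Fin k => Euc n) ℝ
    (fun _ => δ)).hasFDerivAt).comp_hasDerivAt t h2
  exact h3

lemma my_nonpos {f f' : ℝ → ℝ} (h : ∀ t, HasDerivAt f (f' t) t) (h0 : f 0 = 0)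
    (hn : ∀ t ∈ Set.Icc (0:ℝ) 1, f' t ≤ 0) : ∀ t ∈ Set.Icc (0:ℝ) 1, f t ≤ 0 := by
  have hanti : AntitoneOn f (Set.Icc 0 1) := by
    apply antitoneOn_of_deriv_nonpos (convex_Icc 0 1)
      (fun t _ => (h t).continuousAt.continuousWithinAt)
      (fun t _ => (h t).differentiableAt.differentiableWithinAt)
    intro t ht
    rw [(h t).deriv]
    exact hn t (interior_subset ht)
  intro t ht
  have := hanti (Set.left_mem_Icc.2 zero_le_one) ht ht.1
  linarith

lemma my_taylor {φ φ1 φ2 φ3 : ℝ → ℝ} {B : ℝ} (h0 : ∀ t, HasDerivAt φ (φ1 t) t)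
    (h1 : ∀ t, HasDerivAt φ1 (φ2 t) t) (h2 : ∀ t, HasDerivAt φ2 (φ3 t) t)
    (hB : ∀ t ∈ Set.Icc (0:ℝ) 1, φ3 t ≤ B) :
    φ 1 ≤ φ 0 + φ1 0 + φ2 0 / 2 + B / 6 := by
  have hid : ∀ t : ℝ, HasDerivAt (fun t : ℝ => t) 1 t := hasDerivAt_id
  have a2 := my_nonpos (f := fun t => φ2 t - φ2 0 - B * t) (f' := fun t => φ3 t - B)
    (fun t => by
      have := ((h2 t).sub_const (φ2 0)).sub ((hid t).const_mul B)
      refine this.congr_deriv ?_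
      simp) (by simp) (fun t ht => by linarith [hB t ht])
  have a1 := my_nonpos (f := fun t => φ1 t - φ1 0 - φ2 0 * t - B / 2 * t ^ 2)
    (f' := fun t => φ2 t - φ2 0 - B * t)
    (fun t => by
      have := (((h1 t).sub_const (φ1 0)).sub ((hid t).const_mul (φ2 0))).sub
        (((hid t).pow 2).const_mul (B / 2))
      refine this.congr_deriv ?_
      simp; ring) (by simp) a2
  have a0 := my_nonpos (f := fun t => φ t - φ 0 - φ1 0 * t - φ2 0 / 2 * t ^ 2 - B / 6 * t ^ 3)
    (f' := fun t => φ1 t - φ1 0 - φ2 0 * t - B / 2 * t ^ 2)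
    (fun t => by
      have := ((((h0 t).sub_const (φ 0)).sub ((hid t).const_mul (φ1 0))).sub
        (((hid t).pow 2).const_mul (φ2 0 / 2))).sub (((hid t).pow 3).const_mul (B / 6))
      refine this.congr_deriv ?_
      simp; ring) (by simp) a1
  have := a0 1 (by simp)
  simp at this
  linarith

lemma my_growth {f f1 : ℝ → ℝ} {k : ℝ} (h0 : ∀ t, HasDerivAt f (f1 t) t)
    (h1 : ∀ t, f1 t ≤ k * f t) : ∀ t ∈ Set.Icc (0:ℝ) 1, f t ≤ f 0 * Real.exp (k * t) := by
  intro t ht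
  have hid : ∀ t : ℝ, HasDerivAt (fun t : ℝ => t) 1 t := hasDerivAt_id
  have := my_nonpos (f := fun t => f t * Real.exp (-(k * t)) - f 0)
    (f' := fun t => (f1 t - k * f t) * Real.exp (-(k * t)))
    (fun t => by
      have := ((h0 t).mul ((hid t).const_mul k).neg.exp).sub_const (f 0)
      refine this.congr_deriv ?_
      simp; ring) (by simp)
    (fun t _ => mul_nonpos_of_nonpos_of_nonneg (by linarith [h1 t]) (Real.exp_pos _).le) t ht
  have h2 : f t * Real.exp (-(k * t)) ≤ f 0 := by linarith
  calc f t = f t * Real.exp (-(k * t)) * Real.exp (k * t) := by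
        rw [mul_assoc, ← Real.exp_add]; simp
    _ ≤ _ := by gcongr

lemma my_pow_taylor {f f1 f2 f3 : ℝ → ℝ} {C r ℓ : ℝ} (hC : 0 ≤ C) (hr : 0 ≤ r) (hℓ : 1 < ℓ)
    (h0 : ∀ t, HasDerivAt f (f1 t) t)
    (h1 : ∀ t, HasDerivAt f1 (f2 t) t) (h2 : ∀ t, HasDerivAt f2 (f3 t) t)
    (hf : ∀ t, 1 ≤ f t) (b1 : ∀ t, |f1 t| ≤ C * f t * r) (b2 : ∀ t, |f2 t| ≤ C * f t * r ^ 2)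
    (b3 : ∀ t, |f3 t| ≤ C * f t * r ^ 3) :
    f 1 ^ ℓ ≤ f 0 ^ ℓ + ℓ * f 0 ^ (ℓ - 1) * f1 0
      + (ℓ * (ℓ - 1) * f 0 ^ (ℓ - 2) * (f1 0) ^ 2 + ℓ * f 0 ^ (ℓ - 1) * f2 0) / 2
      + (ℓ * (ℓ - 1) * |ℓ - 2| * C ^ 3 + 3 * ℓ * (ℓ - 1) * C ^ 2 + ℓ * C) * f 0 ^ ℓ
        * (r ^ 3 * Real.exp (ℓ * C * r)) := by
  have hfp : ∀ t, 0 < f t := fun t => by linarith [hf t]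
  have hp : ∀ (p : ℝ) t, HasDerivAt (fun t => f t ^ p) (f1 t * p * f t ^ (p - 1)) t :=
    fun p t => (h0 t).rpow_const (Or.inl (hfp t).ne')
  have hl1 : 0 < ℓ - 1 := by linarith
  have hl0 : 0 < ℓ := by linarith
  have e1 : ∀ t, f t ^ ℓ = f t ^ (ℓ - 1) * f t := fun t => by
    conv_rhs => rw [← Real.rpow_add_one (hfp t).ne']
    congr 1; ring
  have e2 : ∀ t, f t ^ ℓ = f t ^ (ℓ - 2) * f t ^ 2 := fun t => by
    rw [← Real.rpow_natCast (f t) 2, ← Real.rpow_add (hfp t)]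
    congr 1; push_cast; ring
  have e3 : ∀ t, f t ^ ℓ = f t ^ (ℓ - 3) * f t ^ 3 := fun t => by
    rw [← Real.rpow_natCast (f t) 3, ← Real.rpow_add (hfp t)]
    congr 1; push_cast; ring
  set D := (ℓ * (ℓ - 1) * |ℓ - 2| * C ^ 3 + 3 * ℓ * (ℓ - 1) * C ^ 2 + ℓ * C) with hD
  have hD0 : 0 ≤ D := by positivity
  have T := my_taylor (φ := fun t => f t ^ ℓ) (φ1 := fun t => ℓ * f t ^ (ℓ - 1) * f1 t)
    (φ2 := fun t => ℓ * (ℓ - 1) * f t ^ (ℓ - 2) * (f1 t) ^ 2 + ℓ * f t ^ (ℓ - 1) * f2 t)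
    (φ3 := fun t => ℓ * (ℓ - 1) * (ℓ - 2) * f t ^ (ℓ - 3) * (f1 t) ^ 3
      + 3 * ℓ * (ℓ - 1) * f t ^ (ℓ - 2) * (f1 t * f2 t) + ℓ * f t ^ (ℓ - 1) * f3 t)
    (B := D * f 0 ^ ℓ * (r ^ 3 * Real.exp (ℓ * C * r)))
    (fun t => by
      refine (hp ℓ t).congr_deriv ?_
      ring)
    (fun t => by
      refine (((hp (ℓ - 1) t).const_mul ℓ).mul (h1 t)).congr_deriv ?_
      rw [show ℓ - 1 - 1 = ℓ - 2 by ring]; ring)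
    (fun t => by
      refine ((((hp (ℓ - 2) t).const_mul (ℓ * (ℓ - 1))).mul ((h1 t).pow 2)).add
        (((hp (ℓ - 1) t).const_mul ℓ).mul (h2 t))).congr_deriv ?_
      rw [show ℓ - 1 - 1 = ℓ - 2 by ring, show ℓ - 2 - 1 = ℓ - 3 by ring]
      simp; ring)
    (fun t ht => by
      have hg := my_growth h0 (k := C * r) (fun t => by
        have := (le_abs_self _).trans (b1 t); linarith) t ht
      have hg' : f t ^ ℓ ≤ f 0 ^ ℓ * Real.exp (ℓ * C * r) := by
        have : f t ≤ f 0 * Real.exp (C * r) := hg.trans (by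
          have := hfp 0
          refine mul_le_mul_of_nonneg_left (Real.exp_le_exp.2 ?_) this.le
          exact mul_le_of_le_one_right (by positivity) ht.2)
        calc f t ^ ℓ ≤ (f 0 * Real.exp (C * r)) ^ ℓ :=
              Real.rpow_le_rpow (hfp t).le this hl0.le
          _ = _ := by
            rw [Real.mul_rpow (hfp 0).le (Real.exp_pos _).le, ← Real.exp_mul]
            congr 2; ring
      have p0 := hfp t
      have t1 : ℓ * (ℓ - 1) * (ℓ - 2) * f t ^ (ℓ - 3) * (f1 t) ^ 3 ≤
          ℓ * (ℓ - 1) * |ℓ - 2| * f t ^ (ℓ - 3) * (C * f t * r) ^ 3 := by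
        refine (le_abs_self _).trans ?_
        rw [abs_mul, abs_mul, abs_mul, abs_mul, abs_of_pos hl0, abs_of_pos hl1,
          abs_of_pos (Real.rpow_pos_of_pos p0 _), abs_pow]
        have := b1 t
        gcongr
      have t2 : 3 * ℓ * (ℓ - 1) * f t ^ (ℓ - 2) * (f1 t * f2 t) ≤
          3 * ℓ * (ℓ - 1) * f t ^ (ℓ - 2) * ((C * f t * r) * (C * f t * r ^ 2)) := by
        have : f1 t * f2 t ≤ (C * f t * r) * (C * f t * r ^ 2) := by
          refine (le_abs_self _).trans ?_
          rw [abs_mul]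
          exact mul_le_mul (b1 t) (b2 t) (abs_nonneg _) (by positivity)
        gcongr
      have t3 : ℓ * f t ^ (ℓ - 1) * f3 t ≤ ℓ * f t ^ (ℓ - 1) * (C * f t * r ^ 3) := by
        have := (le_abs_self _).trans (b3 t)
        gcongr
      have t4 : ℓ * (ℓ - 1) * |ℓ - 2| * f t ^ (ℓ - 3) * (C * f t * r) ^ 3
          + 3 * ℓ * (ℓ - 1) * f t ^ (ℓ - 2) * ((C * f t * r) * (C * f t * r ^ 2))
          + ℓ * f t ^ (ℓ - 1) * (C * f t * r ^ 3) = D * f t ^ ℓ * r ^ 3 := by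
        have a1 : ℓ * (ℓ - 1) * |ℓ - 2| * f t ^ (ℓ - 3) * (C * f t * r) ^ 3
          = ℓ * (ℓ - 1) * |ℓ - 2| * C ^ 3 * f t ^ ℓ * r ^ 3 := by rw [e3 t]; ring
        have a2 : 3 * ℓ * (ℓ - 1) * f t ^ (ℓ - 2) * ((C * f t * r) * (C * f t * r ^ 2))
          = 3 * ℓ * (ℓ - 1) * C ^ 2 * f t ^ ℓ * r ^ 3 := by rw [e2 t]; ring
        have a3 : ℓ * f t ^ (ℓ - 1) * (C * f t * r ^ 3) = ℓ * C * f t ^ ℓ * r ^ 3 := by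
          rw [e1 t]; ring
        rw [a1, a2, a3, hD]; ring
      have t5 : D * f t ^ ℓ * r ^ 3 ≤ D * (f 0 ^ ℓ * Real.exp (ℓ * C * r)) * r ^ 3 := by gcongr
      have t6 : D * (f 0 ^ ℓ * Real.exp (ℓ * C * r)) * r ^ 3
        = D * f 0 ^ ℓ * (r ^ 3 * Real.exp (ℓ * C * r)) := by ring
      linarith)
  have hB0 : 0 ≤ D * f 0 ^ ℓ * (r ^ 3 * Real.exp (ℓ * C * r)) := by
    have := Real.rpow_nonneg (hfp 0).le ℓ
    positivity
  linarith

lemma my_U_taylor {n : ℕ} {U : Euc n → ℝ} (hU : ContDiff ℝ 4 U) (h1 : ∀ x, 1 ≤ U x) {C ℓ : ℝ}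
    (hC : 0 ≤ C) (hℓ : 1 < ℓ) (hg : ∀ x, ‖gradient U x‖ ≤ C * U x)
    (h2 : ∀ x, ‖iteratedFDeriv ℝ 2 U x‖ ≤ C * U x)
    (h3 : ∀ x, ‖iteratedFDeriv ℝ 3 U x‖ ≤ C * U x) (x δ : Euc n) :
    U (x + δ) ^ ℓ ≤ U x ^ ℓ + ℓ * U x ^ (ℓ - 1) * fderiv ℝ U x δ
      + (ℓ * (ℓ - 1) * U x ^ (ℓ - 2) * (fderiv ℝ U x δ) ^ 2
        + ℓ * U x ^ (ℓ - 1) * fderiv ℝ (fderiv ℝ U) x δ δ) / 2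
      + (ℓ * (ℓ - 1) * |ℓ - 2| * C ^ 3 + 3 * ℓ * (ℓ - 1) * C ^ 2 + ℓ * C) * U x ^ ℓ
        * (‖δ‖ ^ 3 * Real.exp (ℓ * C * ‖δ‖)) := by
  have hb : ∀ k : ℕ, (∀ x, ‖iteratedFDeriv ℝ k U x‖ ≤ C * U x) → ∀ t : ℝ,
      |iteratedFDeriv ℝ k U (x + t • δ) (fun _ => δ)| ≤ C * U (x + t • δ) * ‖δ‖ ^ k := by
    intro k hk t
    have := (iteratedFDeriv ℝ k U (x + t • δ)).le_opNorm (fun _ => δ)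
    simp only [Finset.prod_const, Finset.card_univ, Fintype.card_fin] at this
    rw [← Real.norm_eq_abs]
    exact this.trans (mul_le_mul_of_nonneg_right (hk _) (by positivity))
  have T := my_pow_taylor (f := fun t => U (x + t • δ))
    (f1 := fun t => iteratedFDeriv ℝ 1 U (x + t • δ) (fun _ => δ))
    (f2 := fun t => iteratedFDeriv ℝ 2 U (x + t • δ) (fun _ => δ))
    (f3 := fun t => iteratedFDeriv ℝ 3 U (x + t • δ) (fun _ => δ)) hC (norm_nonneg δ) hℓ
    (fun t => by simpa using my_line_deriv hU x δ 0 (by norm_num) t)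
    (my_line_deriv hU x δ 1 (by norm_num)) (my_line_deriv hU x δ 2 (by norm_num))
    (fun t => h1 _)
    (fun t => by
      simp only [iteratedFDeriv_one_apply]
      rw [← inner_gradient_left]
      exact (abs_real_inner_le_norm _ _).trans
        (mul_le_mul_of_nonneg_right (hg _) (norm_nonneg _)))
    (hb 2 h2) (hb 3 h3)
  simp only [iteratedFDeriv_one_apply, iteratedFDeriv_two_apply, one_smul, zero_smul,
    add_zero] at T
  exact T

set_option maxHeartbeats 1000000 in
/-- Bound on the expectation of `U ^ ℓ` after one step. -/
lemma my_expect {n : ℕ} {U : Euc n → ℝ} (hU : ContDiff ℝ 4 U) (h1 : ∀ x, 1 ≤ U x) {C ℓ β : ℝ}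
    (hβ : 0 < β)
    (hC : 0 ≤ C) (hℓ : 1 < ℓ) (hg : ∀ x, ‖gradient U x‖ ≤ C * U x)
    (h2 : ∀ x, ‖iteratedFDeriv ℝ 2 U x‖ ≤ C * U x)
    (h3 : ∀ x, ‖iteratedFDeriv ℝ 3 U x‖ ≤ C * U x) {a h : ℝ} (ha : a ≤ 1) (hh : 0 < h)
    (x : Euc n) (hx : Real.sqrt h * U x ≤ a) (F : Euc n → ℝ) (hF0 : ∀ ξ, 0 ≤ F ξ)
    (hF : ∀ ξ, F ξ ≤ U (x - h • gradient U x + Real.sqrt (2 * β⁻¹ * h) • ξ) ^ ℓ) :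
    ∫ ξ, F ξ ∂(stdGaussian n) ≤ U x ^ ℓ + ℓ * U x ^ (ℓ - 1) * (- h * ‖gradient U x‖ ^ 2)
      + (ℓ * (ℓ - 1) * U x ^ (ℓ - 2) *
          (h ^ 2 * (‖gradient U x‖ ^ 2) ^ 2 + 2 * β⁻¹ * h * ‖gradient U x‖ ^ 2)
        + ℓ * U x ^ (ℓ - 1) * (h ^ 2 * D2 U x (gradient U x) (gradient U x)
            + 2 * β⁻¹ * h * lapl U x)) / 2
      + (ℓ * (ℓ - 1) * |ℓ - 2| * C ^ 3 + 3 * ℓ * (ℓ - 1) * C ^ 2 + ℓ * C) * U x ^ ℓ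
        * (h * a * ∫ ξ, (C + Real.sqrt (2 * β⁻¹) * ‖ξ‖) ^ 3 *
            Real.exp (ℓ * C * (C + Real.sqrt (2 * β⁻¹) * ‖ξ‖)) ∂(stdGaussian n)) := by
  set g := gradient U x with hgdef
  set σ := Real.sqrt (2 * β⁻¹ * h) with hσ
  set s := Real.sqrt (2 * β⁻¹) with hs
  set D := (ℓ * (ℓ - 1) * |ℓ - 2| * C ^ 3 + 3 * ℓ * (ℓ - 1) * C ^ 2 + ℓ * C) with hD
  have hl1 : 0 < ℓ - 1 := by linarith
  have hl0 : 0 < ℓ := by linarith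
  have hD0 : 0 ≤ D := by positivity
  have hu : 0 < U x := by linarith [h1 x]
  have hσs : σ = s * Real.sqrt h := by rw [hσ, hs, Real.sqrt_mul (by positivity)]
  have hσ2 : σ ^ 2 = 2 * β⁻¹ * h := Real.sq_sqrt (by positivity)
  have hsh : 0 < Real.sqrt h := Real.sqrt_pos.2 hh
  have hsh2 : Real.sqrt h * Real.sqrt h = h := Real.mul_self_sqrt hh.le
  have hsha : Real.sqrt h ≤ a := le_trans (by nlinarith [h1 x]) hx
  have hs0 : 0 ≤ s := Real.sqrt_nonneg _
  have ha0 : 0 < a := hsh.trans_le hsha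
  set B1 : Euc n →L[ℝ] Euc n →L[ℝ] ℝ := (fderiv ℝ U x).smulRight (fderiv ℝ U x) with hB1
  set B2 : Euc n →L[ℝ] Euc n →L[ℝ] ℝ := fderiv ℝ (fderiv ℝ U) x with hB2
  obtain ⟨iL, eL⟩ := my_integral_dual_shift n (fderiv ℝ U x) (-(h • g)) σ
  obtain ⟨i1, e1⟩ := my_integral_bilin_shift n B1 (-(h • g)) σ
  obtain ⟨i2, e2⟩ := my_integral_bilin_shift n B2 (-(h • g)) σ
  have iG := my_integrable_poly_exp n C s (ℓ * C) hC hs0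
  have hgg : fderiv ℝ U x g = ‖g‖ ^ 2 := by
    rw [← inner_gradient_left, ← hgdef, real_inner_self_eq_norm_sq]
  have vL : fderiv ℝ U x (-(h • g)) = - h * ‖g‖ ^ 2 := by
    rw [map_neg, map_smul, hgg]; simp
  have v1 : B1 (-(h • g)) (-(h • g)) + σ ^ 2 * ∑ i, B1 (EuclideanSpace.single i 1)
      (EuclideanSpace.single i 1) = h ^ 2 * (‖g‖ ^ 2) ^ 2 + 2 * β⁻¹ * h * ‖g‖ ^ 2 := by
    rw [hσ2]
    have : ∑ i, B1 (EuclideanSpace.single i 1) (EuclideanSpace.single i 1) = ‖g‖ ^ 2 := by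
      rw [EuclideanSpace.real_norm_sq_eq]
      refine Finset.sum_congr rfl fun i _ => ?_
      have : fderiv ℝ U x (EuclideanSpace.single i 1) = g i := by
        rw [← inner_gradient_left, ← hgdef, EuclideanSpace.inner_single_right]; simp
      simp [hB1, this, sq]
    rw [this]
    simp only [hB1, ContinuousLinearMap.smulRight_apply, smul_apply, vL,
      smul_eq_mul]
    ring
  have hD2 : ∀ v w, D2 U x v w = B2 v w := by
    intro v w; simp [D2, iteratedFDeriv_two_apply, hB2]
  have v2 : B2 (-(h • g)) (-(h • g)) + σ ^ 2 * ∑ i, B2 (EuclideanSpace.single i 1)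
      (EuclideanSpace.single i 1) = h ^ 2 * D2 U x g g + 2 * β⁻¹ * h * lapl U x := by
    simp only [lapl, hD2, hσ2, map_neg, map_smul, neg_apply,
      smul_apply, smul_eq_mul]
    ring
  rw [← v1, ← v2, ← e1, ← e2, ← vL, ← eL]
  -- pointwise bound
  have hpt : ∀ ξ, F ξ ≤ U x ^ ℓ + ℓ * U x ^ (ℓ - 1) * fderiv ℝ U x (-(h • g) + σ • ξ)
      + (ℓ * (ℓ - 1) * U x ^ (ℓ - 2) * B1 (-(h • g) + σ • ξ) (-(h • g) + σ • ξ)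
        + ℓ * U x ^ (ℓ - 1) * B2 (-(h • g) + σ • ξ) (-(h • g) + σ • ξ)) / 2
      + D * U x ^ ℓ * (h * a * ((C + s * ‖ξ‖) ^ 3 * Real.exp (ℓ * C * (C + s * ‖ξ‖)))) := by
    intro ξ
    have T := my_U_taylor hU h1 hC hℓ hg h2 h3 x (-(h • g) + σ • ξ)
    rw [← hD] at T
    have hxe : x - h • g + σ • ξ = x + (-(h • g) + σ • ξ) := by abel
    have hFξ := hF ξ
    rw [hxe] at hFξ
    have hB1e : B1 (-(h • g) + σ • ξ) (-(h • g) + σ • ξ) =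
        (fderiv ℝ U x (-(h • g) + σ • ξ)) ^ 2 := by
      simp only [hB1, ContinuousLinearMap.smulRight_apply, smul_apply,
        smul_eq_mul, sq]
    rw [hB1e]
    set δ := -(h • g) + σ • ξ with hδ
    have hn : ‖δ‖ ≤ Real.sqrt h * (C + s * ‖ξ‖) := by
      have n1 : ‖δ‖ ≤ h * ‖g‖ + σ * ‖ξ‖ := by
        refine (norm_add_le _ _).trans ?_
        rw [norm_neg, norm_smul, norm_smul, Real.norm_of_nonneg hh.le,
          Real.norm_of_nonneg (Real.sqrt_nonneg _)]
      have n2 : h * ‖g‖ ≤ Real.sqrt h * C := by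
        calc h * ‖g‖ ≤ h * (C * U x) := by gcongr; exact hg x
          _ = Real.sqrt h * (C * (Real.sqrt h * U x)) := by linear_combination (-(C * U x)) * hsh2
          _ ≤ Real.sqrt h * (C * 1) := by gcongr; linarith
          _ = _ := by ring
      calc ‖δ‖ ≤ h * ‖g‖ + σ * ‖ξ‖ := n1
        _ ≤ Real.sqrt h * C + s * Real.sqrt h * ‖ξ‖ := by rw [hσs]; exact add_le_add_left n2 _
        _ = _ := by ring
    have hA : 0 ≤ C + s * ‖ξ‖ := by positivity
    have hn' : ‖δ‖ ≤ C + s * ‖ξ‖ := hn.trans (mul_le_of_le_one_left hA (by linarith))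
    have hR : ‖δ‖ ^ 3 * Real.exp (ℓ * C * ‖δ‖) ≤
        h * a * ((C + s * ‖ξ‖) ^ 3 * Real.exp (ℓ * C * (C + s * ‖ξ‖))) := by
      calc ‖δ‖ ^ 3 * Real.exp (ℓ * C * ‖δ‖)
          ≤ (Real.sqrt h * (C + s * ‖ξ‖)) ^ 3 * Real.exp (ℓ * C * (C + s * ‖ξ‖)) := by gcongr
        _ = ((Real.sqrt h * Real.sqrt h) * Real.sqrt h) *
            ((C + s * ‖ξ‖) ^ 3 * Real.exp (ℓ * C * (C + s * ‖ξ‖))) := by ring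
        _ ≤ _ := by
          rw [hsh2]
          gcongr
    have hR' := mul_le_mul_of_nonneg_left hR
      (mul_nonneg hD0 (Real.rpow_nonneg hu.le ℓ))
    linarith
  have I1 : Integrable (fun ξ => U x ^ ℓ + ℓ * U x ^ (ℓ - 1) * fderiv ℝ U x (-(h • g) + σ • ξ))
    (stdGaussian n) := (integrable_const _).add (iL.const_mul _)
  have I2 : Integrable (fun ξ => (ℓ * (ℓ - 1) * U x ^ (ℓ - 2) * B1 (-(h • g) + σ • ξ) (-(h • g) + σ • ξ)
        + ℓ * U x ^ (ℓ - 1) * B2 (-(h • g) + σ • ξ) (-(h • g) + σ • ξ)) / 2) (stdGaussian n) :=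
    ((i1.const_mul _).add (i2.const_mul _)).div_const 2
  have I3 : Integrable (fun ξ => D * U x ^ ℓ * (h * a * ((C + s * ‖ξ‖) ^ 3 *
      Real.exp (ℓ * C * (C + s * ‖ξ‖))))) (stdGaussian n) := (iG.const_mul _).const_mul _
  refine (integral_mono_of_nonneg (Eventually.of_forall hF0) ((I1.add I2).add I3)
    (Eventually.of_forall hpt)).trans (le_of_eq ?_)
  have := integral_add (I1.add I2) I3
  simp only [Pi.add_apply] at this ⊢
  rw [this, integral_add I1 I2, integral_add (integrable_const _) (iL.const_mul _),
    integral_div, integral_add (i1.const_mul _) (i2.const_mul _)]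
  simp only [integral_const_mul]
  simp

/-- Scalar inequality closing the argument. -/
lemma my_scalar {W u G Q L h a ℓ β C D G0 P : ℝ} (hW : 0 < W) (hu : 1 ≤ u) (hG : 0 ≤ G)
    (hC : 0 ≤ C) (hh : 0 < h) (ha0 : 0 < a) (ha : a ≤ 1) (hℓ : 1 < ℓ)
    (hGu : G ≤ C ^ 2 * u ^ 2) (hQ : Q ≤ C ^ 3 * u ^ 3) (hhu : h * u ^ 2 ≤ a ^ 2)
    (hP : P = (ℓ * (ℓ - 1) * C ^ 4 + ℓ * C ^ 3) / 2 + D * G0) :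
    W * u ^ 2 + ℓ * (W * u) * (-h * G) + (ℓ * (ℓ - 1) * W * (h ^ 2 * G ^ 2 + 2 * β⁻¹ * h * G)
      + ℓ * (W * u) * (h ^ 2 * Q + 2 * β⁻¹ * h * L)) / 2 + D * (W * u ^ 2) * (h * a * G0)
      ≤ W * u ^ 2 + h * (W * (-ℓ * u * G + ℓ * (ℓ - 1) * β⁻¹ * G + ℓ * β⁻¹ * u * L
        + a * P * u ^ 2)) := by
  have hl1 : 0 < ℓ - 1 := by linarith
  have hl0 : 0 < ℓ := by linarith
  have hhu' : h * u ^ 2 ≤ a := hhu.trans (by nlinarith)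
  have k1 : h * G ^ 2 ≤ a * (C ^ 4 * u ^ 2) := by
    calc h * G ^ 2 ≤ h * (C ^ 2 * u ^ 2) ^ 2 := by gcongr
      _ = (h * u ^ 2) * (C ^ 4 * u ^ 2) := by ring
      _ ≤ _ := by gcongr
  have k2 : h * u * Q ≤ a * (C ^ 3 * u ^ 2) := by
    calc h * u * Q ≤ h * u * (C ^ 3 * u ^ 3) := by gcongr
      _ = (h * u ^ 2) * (C ^ 3 * u ^ 2) := by ring
      _ ≤ _ := by gcongr
  have k3 : ℓ * (ℓ - 1) * W * h / 2 * (h * G ^ 2) ≤ ℓ * (ℓ - 1) * W * h / 2 * (a * (C ^ 4 * u ^ 2)) := by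
    gcongr
  have k4 : ℓ * W * h / 2 * (h * u * Q) ≤ ℓ * W * h / 2 * (a * (C ^ 3 * u ^ 2)) := by gcongr
  rw [hP]
  linear_combination k3 + k4

/-- Truncated drift condition for forward Euler. -/
theorem euler_truncated_drift (n : ℕ) (β : ℝ) (hβ : 0 < β)
    (U : Euc n → ℝ) (hU : Assumption1 n β U) (ℓ : ℝ) (hℓ : 1 < ℓ) :
    ∃ a > (0:ℝ), ∃ K > (0:ℝ), ∀ h : ℝ, 0 < h → h < 1 → ∀ x : Euc n,
      (∫ ξ, (min (U (x - h • gradient U x + Real.sqrt (2 * β⁻¹ * h) • ξ))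
              (a * h ^ (-(1:ℝ)/2))) ^ ℓ ∂(stdGaussian n))
        ≤ (min (U x) (a * h ^ (-(1:ℝ)/2))) ^ ℓ + h * K := by
  obtain ⟨C, hC, hb⟩ := hU.deriv_bound
  have hg : ∀ x, ‖gradient U x‖ ≤ C * U x := fun x => (le_max_right _ _).trans (hb x)
  have h2 : ∀ x, ‖iteratedFDeriv ℝ 2 U x‖ ≤ C * U x := fun x =>
    ((le_max_right _ _).trans (le_max_left _ _)).trans (hb x)
  have h3 : ∀ x, ‖iteratedFDeriv ℝ 3 U x‖ ≤ C * U x := fun x =>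
    (((le_max_right _ _).trans (le_max_left _ _)).trans (le_max_left _ _)).trans (hb x)
  have h1 := hU.one_le
  have hc := hU.c_lt
  have hd := hU.d_pos
  have hdr := hU.driftB
  set c := hU.c
  set d := hU.d
  set E := max (max hU.EB ((ℓ - 1) / (β - c))) 1 with hE
  have hl1 : 0 < ℓ - 1 := by linarith
  have hl0 : 0 < ℓ := by linarith
  have hβi : 0 < β⁻¹ := inv_pos.2 hβ
  set D := (ℓ * (ℓ - 1) * |ℓ - 2| * C ^ 3 + 3 * ℓ * (ℓ - 1) * C ^ 2 + ℓ * C) with hD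
  have hD0 : 0 ≤ D := by positivity
  set G0 := ∫ ξ, (C + Real.sqrt (2 * β⁻¹) * ‖ξ‖) ^ 3 *
            Real.exp (ℓ * C * (C + Real.sqrt (2 * β⁻¹) * ‖ξ‖)) ∂(stdGaussian n) with hG0
  have hG00 : 0 ≤ G0 := integral_nonneg fun ξ => by positivity
  set P := (ℓ * (ℓ - 1) * C ^ 4 + ℓ * C ^ 3) / 2 + D * G0 with hP
  have hP0 : 0 < P := by positivity
  set a := min 1 (ℓ * d * β⁻¹ / P) with ha
  have ha0 : 0 < a := lt_min one_pos (by positivity)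
  have ha1 : a ≤ 1 := min_le_left _ _
  have haP : a * P ≤ ℓ * d * β⁻¹ := (le_div_iff₀ hP0).1 (min_le_right _ _)
  set K0 := ℓ * (ℓ - 1) * β⁻¹ * C ^ 2 + ℓ * β⁻¹ * (n * C) + P with hK0
  have hK00 : 0 < K0 := by positivity
  have hE1 : 1 ≤ E := le_max_right _ _
  have hE0 : 0 < E := by linarith
  refine ⟨a, ha0, E ^ ℓ * K0, by positivity, ?_⟩
  intro h hh hh1 x
  have hu := h1 x
  have hu0 : 0 < U x := by linarith
  have hK : 0 ≤ h * (E ^ ℓ * K0) := by positivity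
  have hM0 : 0 < a * h ^ (-(1:ℝ)/2) := by positivity
  set M := a * h ^ (-(1:ℝ)/2) with hM
  have hmin0 : ∀ y, 0 < min (U y) M := fun y => lt_min (by linarith [h1 y]) hM0
  rcases le_or_gt M (U x) with hxM | hxM
  · rw [min_eq_right hxM]
    have : ∫ ξ, (min (U (x - h • gradient U x + Real.sqrt (2 * β⁻¹ * h) • ξ)) M) ^ ℓ
        ∂(stdGaussian n) ≤ ∫ ξ, M ^ ℓ ∂(stdGaussian n) :=
      integral_mono_of_nonneg (Eventually.of_forall fun ξ => Real.rpow_nonneg (hmin0 _).le _)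
        (integrable_const _) (Eventually.of_forall fun ξ =>
          Real.rpow_le_rpow (hmin0 _).le (min_le_right _ _) hl0.le)
    simp at this
    linarith
  · rw [min_eq_left hxM.le]
    have hsh : 0 < Real.sqrt h := Real.sqrt_pos.2 hh
    have hx : Real.sqrt h * U x ≤ a := by
      have e : h ^ (-(1:ℝ)/2) = (Real.sqrt h)⁻¹ := by
        rw [Real.sqrt_eq_rpow, ← Real.rpow_neg hh.le]; congr 1; ring
      rw [hM, e, ← div_eq_mul_inv, lt_div_iff₀ hsh] at hxM
      linarith
    have hhu : h * U x ^ 2 ≤ a ^ 2 := by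
      have : (Real.sqrt h * U x) ^ 2 ≤ a ^ 2 := by gcongr
      rwa [mul_pow, Real.sq_sqrt hh.le] at this
    have T := my_expect hU.smooth h1 hβ hC.le hℓ hg h2 h3 ha1 hh x hx
      (fun ξ => (min (U (x - h • gradient U x + Real.sqrt (2 * β⁻¹ * h) • ξ)) M) ^ ℓ)
      (fun ξ => Real.rpow_nonneg (hmin0 _).le _)
      (fun ξ => Real.rpow_le_rpow (hmin0 _).le (min_le_left _ _) hl0.le)
    rw [← hD, ← hG0] at T
    have e1 : U x ^ (ℓ - 1) = U x ^ (ℓ - 2) * U x := by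
      conv_rhs => rw [← Real.rpow_add_one hu0.ne']
      congr 1; ring
    have e2 : U x ^ ℓ = U x ^ (ℓ - 2) * U x ^ 2 := by
      rw [← Real.rpow_natCast (U x) 2, ← Real.rpow_add hu0]
      congr 1; push_cast; ring
    have hD2 : ∀ v, |D2 U x v v| ≤ C * U x * ‖v‖ ^ 2 := by
      intro v
      have := (iteratedFDeriv ℝ 2 U x).le_opNorm ![v, v]
      simp only [Fin.prod_univ_two, Matrix.cons_val_zero, Matrix.cons_val_one] at this
      rw [← Real.norm_eq_abs, sq]
      exact this.trans (mul_le_mul_of_nonneg_right (h2 x) (by positivity))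
    have hGu : ‖gradient U x‖ ^ 2 ≤ C ^ 2 * U x ^ 2 := by
      rw [← mul_pow]; have := hg x; gcongr
    have hQ : D2 U x (gradient U x) (gradient U x) ≤ C ^ 3 * U x ^ 3 := by
      refine ((le_abs_self _).trans (hD2 _)).trans ?_
      calc _ ≤ C * U x * (C ^ 2 * U x ^ 2) := by gcongr
        _ = _ := by ring
    have hL : lapl U x ≤ n * C * U x := by
      have : lapl U x ≤ ∑ i : Fin n, C * U x := by
        refine Finset.sum_le_sum fun i _ => ?_
        have := (le_abs_self _).trans (hD2 (EuclideanSpace.single i 1))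
        simpa using this
      simp at this
      linarith
    have hW : 0 < U x ^ (ℓ - 2) := Real.rpow_pos_of_pos hu0 _
    refine T.trans ?_
    have hEl : U x ≤ E → U x ^ ℓ ≤ E ^ ℓ := fun hle => Real.rpow_le_rpow hu0.le hle hl0.le
    rw [e1, e2]
    rw [e2] at hEl
    generalize U x ^ (ℓ - 2) = W at *
    have hGn : 0 ≤ ‖gradient U x‖ ^ 2 := by positivity
    refine (my_scalar (L := lapl U x) hW hu hGn hC.le hh ha0 ha1 hℓ hGu hQ hhu hP).trans ?_
    have hdrx := hdr x
    generalize ‖gradient U x‖ ^ 2 = G at *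
    generalize lapl U x = L at *
    generalize U x = u at *
    refine add_le_add_right (mul_le_mul_of_nonneg_left ?_ hh.le) _
    rcases le_or_gt u E with hle | hgt
    · have b : -ℓ * u * G + ℓ * (ℓ - 1) * β⁻¹ * G + ℓ * β⁻¹ * u * L + a * P * u ^ 2
          ≤ K0 * u ^ 2 := by
        have b1 : 0 ≤ ℓ * u * G := by positivity
        have b2 : ℓ * (ℓ - 1) * β⁻¹ * G ≤ ℓ * (ℓ - 1) * β⁻¹ * (C ^ 2 * u ^ 2) := by gcongr
        have b3 : ℓ * β⁻¹ * u * L ≤ ℓ * β⁻¹ * u * (n * C * u) := by gcongr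
        have b4 : a * P * u ^ 2 ≤ 1 * P * u ^ 2 := by gcongr
        rw [hK0]
        linear_combination b1 + b2 + b3 + b4
      calc _ ≤ W * (K0 * u ^ 2) := mul_le_mul_of_nonneg_left b hW.le
        _ = (W * u ^ 2) * K0 := by ring
        _ ≤ _ := mul_le_mul_of_nonneg_right (hEl hle) hK00.le
    · have g1 : hU.EB < u := ((le_max_left _ _).trans (le_max_left _ _)).trans_lt hgt
      have g2 : (ℓ - 1) / (β - c) < u := ((le_max_right _ _).trans (le_max_left _ _)).trans_lt hgt
      have g3 : ℓ - 1 < u * (β - c) := (div_lt_iff₀ (by linarith)).1 g2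
      have hLx := hdrx g1
      have b : -ℓ * u * G + ℓ * (ℓ - 1) * β⁻¹ * G + ℓ * β⁻¹ * u * L + a * P * u ^ 2 ≤ 0 := by
        have b2 : ℓ * β⁻¹ * G * (ℓ - 1) ≤ ℓ * β⁻¹ * G * (u * (β - c)) := by gcongr
        have b3 : ℓ * β⁻¹ * u * L ≤ ℓ * β⁻¹ * u * (c * G - d * u) := by gcongr
        have b4 : a * P * u ^ 2 ≤ ℓ * d * β⁻¹ * u ^ 2 := by gcongr
        have b5 : β⁻¹ * β = 1 := inv_mul_cancel₀ hβ.ne'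
        linear_combination b2 + b3 + b4 + ℓ * u * G * b5
      have : W * (-ℓ * u * G + ℓ * (ℓ - 1) * β⁻¹ * G + ℓ * β⁻¹ * u * L + a * P * u ^ 2) ≤ 0 :=
        mul_nonpos_of_nonneg_of_nonpos hW.le b
      have : 0 ≤ E ^ ℓ * K0 := by positivity
      linarith

end
end
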